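/- Finiteness of the set of minimizers at non-conjugate points: let x ∈ Ω, assume A_x admits at least one minimizer, and assume that for every minimizer φ of A_x the motion γ(t) = a t + φ(t) + x − a takes values in Ω and the bilinear form d²A_x(φ) is invertible. Then the set of minimizers of A_x on D_0^{1,2}(1,+∞) is finite. -/

import Mathlib

open MeasureTheory Real Set Filter Topology
open scoped RealInnerProductSpace ENNReal

noncomputable section
namespace NBodyHJ

attribute [local instance] Classical.propDecidable

abbrev Conf (d N : ℕ) := Fin N → EuclideanSpace ℝ (Fin d)

variable {d N : ℕ}

/-- The mass inner product on the configuration space. -/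
def minner (m : Fin N → ℝ) (x y : Conf d N) : ℝ := ∑ i, m i * ⟪x i, y i⟫

/-- The mass norm on the configuration space. -/
def mnorm (m : Fin N → ℝ) (x : Conf d N) : ℝ := Real.sqrt (minner m x x)

/-- Membership in the zero-barycenter configuration space `X`. -/
def inX (m : Fin N → ℝ) (x : Conf d N) : Prop := ∑ i, m i • x i = 0

/-- Collision configurations. -/
def collision (x : Conf d N) : Prop := ∃ i j, i ≠ j ∧ x i = x j

/-- Membership in the collision-free zero-barycenter space `Ω`. -/
def inOmega (m : Fin N → ℝ) (x : Conf d N) : Prop := inX m x ∧ ¬ collision x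

/-- The Newtonian potential (with junk value `0` for a colliding pair). -/
def U (m : Fin N → ℝ) (x : Conf d N) : ℝ :=
  ∑ i : Fin N, ∑ j : Fin N, if i < j then m i * m j / ‖x i - x j‖ else 0

/-- The time interval `(t₀, T)`, where `T ∈ (t₀, +∞]` is extended-real. -/
def timeSet (t0 : ℝ) (T : EReal) : Set ℝ := {t : ℝ | t0 < t ∧ (t : EReal) < T}

/-- Membership of the pair (curve, derivative) `(φ, φ')` in `D₀^{1,2}(t₀, T)`:
`φ` starts at `0`, takes values in `X`, is the integral of `φ'` (hence locally
absolutely continuous), and `φ'` has finite `L²` mass norm on `(t₀, T)`. -/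
def InD (m : Fin N → ℝ) (t0 : ℝ) (T : EReal) (φ φ' : ℝ → Conf d N) : Prop :=
  φ t0 = 0 ∧
  (∀ t : ℝ, t0 ≤ t → (t : EReal) < T → inX m (φ t)) ∧
  (∀ t : ℝ, t0 ≤ t → (t : EReal) < T → φ t = ∫ s in Set.Ioc t0 t, φ' s) ∧
  (∀ t : ℝ, t0 ≤ t → (t : EReal) < T → IntegrableOn φ' (Set.Ioc t0 t)) ∧
  IntegrableOn (fun t => (mnorm m (φ' t)) ^ 2) (timeSet t0 T)

/-- The norm `‖φ‖_{D_T}`. -/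
def Dnorm (m : Fin N → ℝ) (t0 : ℝ) (T : EReal) (φ' : ℝ → Conf d N) : ℝ :=
  Real.sqrt (∫ t in timeSet t0 T, (mnorm m (φ' t)) ^ 2)

/-- The motion `γ(t) = φ(t) + t a + x - a` associated with `φ` in the hyperbolic case. -/
def hypCurve (a x : Conf d N) (φ : ℝ → Conf d N) (t : ℝ) : Conf d N :=
  φ t + t • a + x - a

/-- The integrand of the hyperbolic renormalized Lagrangian action. -/
def hypIntegrand (m : Fin N → ℝ) (a x : Conf d N) (φ φ' : ℝ → Conf d N) (t : ℝ) : ℝ :=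
  (mnorm m (φ' t)) ^ 2 / 2 + U m (hypCurve a x φ t) - U m (t • a)

/-- The hyperbolic renormalized Lagrangian action `A_{x,[1,T]}(φ)`, with values in
`ℝ ∪ {+∞}` : it equals the integral of the renormalized Lagrangian if this integrand is
integrable and the motion is a.e. collision-free, and `+∞` otherwise. -/
def hypAction (m : Fin N → ℝ) (a x : Conf d N) (T : EReal) (φ φ' : ℝ → Conf d N) : EReal :=
  if IntegrableOn (hypIntegrand m a x φ φ') (timeSet 1 T) ∧
      (∀ᵐ t ∂volume.restrict (timeSet 1 T), ¬ collision (hypCurve a x φ t))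
  then ((∫ t in timeSet 1 T, hypIntegrand m a x φ φ' t : ℝ) : EReal)
  else (⊤ : EReal)

/-- The infimum of the hyperbolic renormalized action over `D₀^{1,2}(1,T)`. -/
def hypInf (m : Fin N → ℝ) (a x : Conf d N) (T : EReal) : EReal :=
  ⨅ (φ : ℝ → Conf d N) (φ' : ℝ → Conf d N) (_ : InD m 1 T φ φ'), hypAction m a x T φ φ'

/-- The renormalized value function `v(x)` in the hyperbolic case. -/
def hypValue (m : Fin N → ℝ) (a x : Conf d N) : ℝ :=
  (hypInf m a x ⊤).toReal - minner m a x


/-- The Hessian quadratic form `⟨∇²U(q) ψ, ψ⟩`, expressed as the second derivative of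
`s ↦ U(q + s ψ)` at `s = 0`. -/
def hessQ (m : Fin N → ℝ) (q ψ : Conf d N) : ℝ :=
  iteratedDeriv 2 (fun s : ℝ => U m (q + s • ψ)) 0

/-- The Hessian bilinear form `⟨∇²U(q) ψ, ζ⟩`, obtained from `hessQ` by polarization. -/
def hessB (m : Fin N → ℝ) (q ψ ζ : Conf d N) : ℝ :=
  (hessQ m q (ψ + ζ) - hessQ m q ψ - hessQ m q ζ) / 2

/-- The Hilbert space `L²((1,∞); ℝ^{dN})`, identified with `D₀^{1,2}(1,+∞)` via the map
`φ ↦ φ̇` (whose inverse is `f ↦ (t ↦ ∫_1^t f)`). -/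
abbrev Hsp (d N : ℕ) := Lp (Conf d N) 2 (volume.restrict (Set.Ioi (1:ℝ)))

/-- The second variation `d²A_x(φ)[ψ, ζ] = ∫_1^∞ ⟨ψ̇, ζ̇⟩_M + ⟨∇²U(γ(t)) ψ(t), ζ(t)⟩ dt`
along the motion `γ`, expressed through the derivatives `f = ψ̇`, `g = ζ̇`. -/
def secondVar (m : Fin N → ℝ) (γ : ℝ → Conf d N) (f g : ℝ → Conf d N) : ℝ :=
  ∫ t in Set.Ioi (1:ℝ),
    (minner m (f t) (g t) +
      hessB m (γ t) (∫ s in Set.Ioc (1:ℝ) t, f s) (∫ s in Set.Ioc (1:ℝ) t, g s))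

/-- Invertibility of the second variation `d²A_x(φ)` along the motion `γ`, as a bilinear
form on `D₀^{1,2}(1,+∞) ≅ L²((1,∞))` : the induced linear map into the (continuous) dual
is bijective. -/
def FormInvertible (m : Fin N → ℝ) (γ : ℝ → Conf d N) : Prop :=
  ∀ L : Hsp d N →L[ℝ] ℝ, ∃! f : Hsp d N, ∀ g : Hsp d N, secondVar m γ f g = L g

lemma half_norm_le_norm_add {E : Type*} [SeminormedAddCommGroup E] {u v : E}
    (hv : ‖v‖ ≤ ‖u‖ / 2) : ‖u‖ / 2 ≤ ‖u + v‖ := by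
  have := norm_sub_le (u + v) v
  rw [add_sub_cancel_right] at this
  linarith

lemma abs_norm_add_sub_norm_le {E : Type*} [SeminormedAddCommGroup E] (u v : E) :
    |‖u + v‖ - ‖u‖| ≤ ‖v‖ := by
  simpa using abs_norm_sub_norm_le (u + v) u

section Kernel

variable {E : Type*} [NormedAddCommGroup E] [InnerProductSpace ℝ E]

/-- The first derivative of `u ↦ ‖u‖⁻¹` at `u` in the direction `v`. -/
def kernelDeriv (u v : E) : ℝ := -(⟪u, v⟫ / ‖u‖ ^ 3)

/-- The second derivative of `u ↦ ‖u‖⁻¹` at `u` in the directions `v`, `z`. -/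
def kernelHess (u v z : E) : ℝ := 3 * ⟪u, v⟫ * ⟪u, z⟫ / ‖u‖ ^ 5 - ⟪v, z⟫ / ‖u‖ ^ 3

lemma abs_kernelDeriv_le {u : E} {r : ℝ} (hr : 0 < r) (hu : r ≤ ‖u‖) (v : E) :
    |kernelDeriv u v| ≤ ‖v‖ / r ^ 2 := by
  have hA : 0 < ‖u‖ := hr.trans_le hu
  rw [kernelDeriv, abs_neg, abs_div, abs_of_pos (pow_pos hA 3)]
  calc |⟪u, v⟫| / ‖u‖ ^ 3 ≤ (‖u‖ * ‖v‖) / ‖u‖ ^ 3 := by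
        gcongr; exact abs_real_inner_le_norm u v
    _ = ‖v‖ / ‖u‖ ^ 2 := by field_simp
    _ ≤ ‖v‖ / r ^ 2 := by gcongr

lemma abs_kernelHess_le {u : E} {r : ℝ} (hr : 0 < r) (hu : r ≤ ‖u‖) (v z : E) :
    |kernelHess u v z| ≤ 4 * (‖v‖ * ‖z‖) / r ^ 3 := by
  have hA : 0 < ‖u‖ := hr.trans_le hu
  have h1 : |3 * ⟪u, v⟫ * ⟪u, z⟫ / ‖u‖ ^ 5| ≤ 3 * (‖v‖ * ‖z‖) / ‖u‖ ^ 3 := by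
    rw [abs_div, abs_of_pos (pow_pos hA 5), abs_mul, abs_mul, abs_of_pos (by norm_num : (0:ℝ) < 3)]
    calc 3 * |⟪u, v⟫| * |⟪u, z⟫| / ‖u‖ ^ 5
        ≤ 3 * (‖u‖ * ‖v‖) * (‖u‖ * ‖z‖) / ‖u‖ ^ 5 := by
          gcongr
          · exact abs_real_inner_le_norm u v
          · exact abs_real_inner_le_norm u z
      _ = 3 * (‖v‖ * ‖z‖) / ‖u‖ ^ 3 := by field_simp
  have h2 : |⟪v, z⟫ / ‖u‖ ^ 3| ≤ (‖v‖ * ‖z‖) / ‖u‖ ^ 3 := by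
    rw [abs_div, abs_of_pos (pow_pos hA 3)]
    gcongr
    exact abs_real_inner_le_norm v z
  calc |kernelHess u v z| ≤ 3 * (‖v‖ * ‖z‖) / ‖u‖ ^ 3 + (‖v‖ * ‖z‖) / ‖u‖ ^ 3 :=
        (abs_sub _ _).trans (add_le_add h1 h2)
    _ = 4 * (‖v‖ * ‖z‖) / ‖u‖ ^ 3 := by ring
    _ ≤ 4 * (‖v‖ * ‖z‖) / r ^ 3 := by gcongr

lemma abs_inv_norm_taylor_le {u v : E} (hu : 0 < ‖u‖) (hv : ‖v‖ ≤ ‖u‖ / 2) :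
    |‖u + v‖⁻¹ - ‖u‖⁻¹ - kernelDeriv u v| ≤ 3 * ‖v‖ ^ 2 / ‖u‖ ^ 3 := by
  have hB2 := half_norm_le_norm_add hv
  have hd := abs_norm_add_sub_norm_le u v
  have hsq := norm_add_sq_real u v
  rw [kernelDeriv]
  have hw := norm_nonneg v
  set A := ‖u‖
  set B := ‖u + v‖
  set w := ‖v‖
  have hB : 0 < B := by linarith
  have hp : ⟪u, v⟫ = (B ^ 2 - A ^ 2 - w ^ 2) / 2 := by linarith
  have hid : B⁻¹ - A⁻¹ - -(⟪u, v⟫ / A ^ 3)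
      = ((B - A) ^ 2 * (1 + 2 * (A / B)) - w ^ 2) / (2 * A ^ 3) := by
    rw [hp]; field_simp; ring
  have hAB : A / B ≤ 2 := by rw [div_le_iff₀ hB]; linarith
  have hAB0 : 0 < A / B := by positivity
  have hdw : (B - A) ^ 2 ≤ w ^ 2 := sq_le_sq' (by linarith [(abs_le.1 hd).1]) (abs_le.1 hd).2
  rw [hid, abs_div, abs_of_pos (show 0 < 2 * A ^ 3 by positivity),
    div_le_div_iff₀ (by positivity) (by positivity)]
  have : |(B - A) ^ 2 * (1 + 2 * (A / B)) - w ^ 2| ≤ 6 * w ^ 2 := by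
    have h1 : (B - A) ^ 2 * (1 + 2 * (A / B)) ≤ w ^ 2 * 5 := by
      gcongr; linarith
    have h2 : 0 ≤ (B - A) ^ 2 * (1 + 2 * (A / B)) := by positivity
    rw [abs_le]; constructor <;> nlinarith [sq_nonneg w]
  calc _ ≤ 6 * w ^ 2 * A ^ 3 := by gcongr
    _ = _ := by ring

lemma abs_kernelDeriv_taylor_le {u v : E} (hu : 0 < ‖u‖) (hv : ‖v‖ ≤ ‖u‖ / 2) (z : E) :
    |kernelDeriv (u + v) z - kernelDeriv u z - kernelHess u v z|
      ≤ 41 * (‖v‖ ^ 2 * ‖z‖) / ‖u‖ ^ 4 := by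
  have hB2 := half_norm_le_norm_add hv
  have hd := abs_norm_add_sub_norm_le u v
  have hT := abs_inv_norm_taylor_le hu hv
  have hw := norm_nonneg v
  have hz := norm_nonneg z
  have huz := abs_real_inner_le_norm u z
  have hvz := abs_real_inner_le_norm v z
  rw [kernelDeriv] at hT
  rw [kernelDeriv, kernelDeriv, kernelHess, inner_add_left]
  set A := ‖u‖
  set B := ‖u + v‖
  set w := ‖v‖
  set p := ⟪u, v⟫
  have hB : 0 < B := by linarith
  obtain ⟨δ, hδ⟩ : ∃ δ, δ = B⁻¹ - A⁻¹ := ⟨_, rfl⟩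
  rw [← hδ] at hT
  have hδle : |δ| ≤ 2 * w / A ^ 2 := by
    have : δ = (A - B) / (A * B) := by rw [hδ]; field_simp
    rw [this, abs_div, abs_of_pos (show 0 < A * B by positivity), abs_sub_comm,
      div_le_div_iff₀ (by positivity) (by positivity)]
    calc |B - A| * A ^ 2 ≤ w * A ^ 2 := by gcongr
      _ = w * A * A := by ring
      _ ≤ w * A * (2 * B) := by gcongr; linarith
      _ = 2 * w * (A * B) := by ring
  have hcube : (B ^ 3)⁻¹ - (A ^ 3)⁻¹ = 3 * (A⁻¹) ^ 2 * δ + 3 * A⁻¹ * δ ^ 2 + δ ^ 3 := by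
    have : B⁻¹ = A⁻¹ + δ := by rw [hδ]; ring
    rw [← inv_pow, ← inv_pow, this]; ring
  have hδ2 : δ ^ 2 ≤ (2 * w / A ^ 2) ^ 2 := by
    rw [← sq_abs]; gcongr
  have hδ3 : |δ ^ 3| ≤ (2 * w / A ^ 2) ^ 3 := by
    rw [abs_pow]; gcongr
  have hδ3' : (2 * w / A ^ 2) ^ 3 ≤ 4 * w ^ 2 / A ^ 5 := by
    rw [div_pow, div_le_div_iff₀ (by positivity) (by positivity)]
    calc (2 * w) ^ 3 * A ^ 5 = 8 * w ^ 2 * A ^ 5 * w := by ring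
      _ ≤ 8 * w ^ 2 * A ^ 5 * (A / 2) := by gcongr
      _ = _ := by ring
  have hrem : |(B ^ 3)⁻¹ - (A ^ 3)⁻¹ + 3 * p / A ^ 5| ≤ 25 * w ^ 2 / A ^ 5 := by
    have e : (B ^ 3)⁻¹ - (A ^ 3)⁻¹ + 3 * p / A ^ 5
        = 3 * (A⁻¹) ^ 2 * (δ - -(p / A ^ 3)) + 3 * A⁻¹ * δ ^ 2 + δ ^ 3 := by
      rw [hcube]; field_simp; ring
    have e1 : |3 * (A⁻¹) ^ 2 * (δ - -(p / A ^ 3))| ≤ 9 * w ^ 2 / A ^ 5 := by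
      rw [abs_mul, abs_of_pos (by positivity)]
      calc _ ≤ 3 * (A⁻¹) ^ 2 * (3 * w ^ 2 / A ^ 3) := by gcongr
        _ = _ := by field_simp; ring
    have e2 : |3 * A⁻¹ * δ ^ 2| ≤ 12 * w ^ 2 / A ^ 5 := by
      rw [abs_of_nonneg (by positivity)]
      calc _ ≤ 3 * A⁻¹ * (2 * w / A ^ 2) ^ 2 := by gcongr
        _ = _ := by field_simp; ring
    rw [e]
    calc _ ≤ 9 * w ^ 2 / A ^ 5 + 12 * w ^ 2 / A ^ 5 + 4 * w ^ 2 / A ^ 5 :=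
          (abs_add_three _ _ _).trans (add_le_add (add_le_add e1 e2) (hδ3.trans hδ3'))
      _ = _ := by ring
  have hpA : |3 * p / A ^ 5| ≤ 3 * w / A ^ 4 := by
    rw [abs_div, abs_of_pos (show 0 < A ^ 5 by positivity), abs_mul,
      abs_of_pos (by norm_num : (0:ℝ) < 3)]
    calc _ ≤ 3 * (A * w) / A ^ 5 := by gcongr; exact abs_real_inner_le_norm u v
      _ = _ := by field_simp
  have hlip : |(B ^ 3)⁻¹ - (A ^ 3)⁻¹| ≤ 15.5 * w / A ^ 4 := by
    have : 25 * w ^ 2 / A ^ 5 ≤ 12.5 * w / A ^ 4 := by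
      rw [div_le_div_iff₀ (by positivity) (by positivity)]
      calc 25 * w ^ 2 * A ^ 4 = 25 * w * A ^ 4 * w := by ring
        _ ≤ 25 * w * A ^ 4 * (A / 2) := by gcongr
        _ = _ := by ring
    calc |(B ^ 3)⁻¹ - (A ^ 3)⁻¹|
        = |((B ^ 3)⁻¹ - (A ^ 3)⁻¹ + 3 * p / A ^ 5) - 3 * p / A ^ 5| := by ring_nf
      _ ≤ 12.5 * w / A ^ 4 + 3 * w / A ^ 4 :=
          (abs_sub _ _).trans (add_le_add (hrem.trans this) hpA)
      _ = _ := by ring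
  have e : -((⟪u, z⟫ + ⟪v, z⟫) / B ^ 3) - -(⟪u, z⟫ / A ^ 3)
        - (3 * p * ⟪u, z⟫ / A ^ 5 - ⟪v, z⟫ / A ^ 3)
      = -(⟪u, z⟫ * ((B ^ 3)⁻¹ - (A ^ 3)⁻¹ + 3 * p / A ^ 5))
        - ⟪v, z⟫ * ((B ^ 3)⁻¹ - (A ^ 3)⁻¹) := by
    simp only [div_eq_mul_inv]; ring
  rw [e]
  calc _ ≤ (A * ‖z‖) * (25 * w ^ 2 / A ^ 5) + (w * ‖z‖) * (15.5 * w / A ^ 4) := by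
        refine (abs_sub _ _).trans (add_le_add ?_ ?_)
        · rw [abs_neg, abs_mul]; gcongr
        · rw [abs_mul]; gcongr
    _ = 40.5 * (w ^ 2 * ‖z‖) / A ^ 4 := by field_simp; ring
    _ ≤ _ := by gcongr; norm_num

lemma hasDerivAt_inv_norm_line {u v : E} {s : ℝ} (h : u + s • v ≠ 0) :
    HasDerivAt (fun s : ℝ => ‖u + s • v‖⁻¹) (kernelDeriv (u + s • v) v) s := by
  have hl : HasDerivAt (fun s : ℝ => u + s • v) v s := by
    simpa using ((hasDerivAt_id s).smul_const v).const_add u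
  have h2 : HasDerivAt (fun s : ℝ => ‖u + s • v‖ ^ 2) (2 * ⟪u + s • v, v⟫) s := hl.norm_sq
  have hpos : 0 < ‖u + s • v‖ := norm_pos_iff.2 h
  have h3 := (h2.sqrt (by positivity)).inv (by rw [Real.sqrt_sq hpos.le]; exact hpos.ne')
  simp only [Real.sqrt_sq (norm_nonneg _)] at h3
  refine h3.congr_deriv ?_
  rw [kernelDeriv]; field_simp

lemma hasDerivAt_kernelDeriv_line {u v : E} (h : u ≠ 0) :
    HasDerivAt (fun s : ℝ => kernelDeriv (u + s • v) v) (kernelHess u v v) 0 := by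
  have hl : HasDerivAt (fun s : ℝ => u + s • v) v 0 := by
    simpa using ((hasDerivAt_id (0:ℝ)).smul_const v).const_add u
  have h1 : HasDerivAt (fun s : ℝ => ⟪u + s • v, v⟫) ⟪v, v⟫ 0 := by
    simpa using hl.inner ℝ (hasDerivAt_const (0:ℝ) v)
  have h2 := (hasDerivAt_inv_norm_line (u := u) (v := v) (s := 0) (by simpa using h)).pow 3
  have h3 := (h1.mul h2).neg
  have hpos : 0 < ‖u‖ := norm_pos_iff.2 h
  refine (h3.congr_deriv ?_).congr_of_eventuallyEq ?_
  · simp [kernelDeriv, kernelHess]; field_simp; ring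
  · refine Eventually.of_forall fun s => ?_
    simp [kernelDeriv, div_eq_mul_inv]

end Kernel

section Potential

/-- The sum of `m i * m j * α i j` over the pairs `i < j`. -/
def pairSum (m : Fin N → ℝ) (α : Fin N → Fin N → ℝ) : ℝ :=
  ∑ i : Fin N, ∑ j : Fin N, if i < j then m i * m j * α i j else 0

/-- The total weight of all pairs. -/
def pairWeight (m : Fin N → ℝ) : ℝ := ∑ i : Fin N, ∑ j : Fin N, m i * m j

/-- The differential of the Newtonian potential at `q` in the direction `v`. -/
def potDeriv (m : Fin N → ℝ) (q v : Conf d N) : ℝ :=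
  pairSum m fun i j => kernelDeriv (q i - q j) (v i - v j)

/-- The Hessian of the Newtonian potential at `q` in the directions `v`, `z`. -/
def potHess (m : Fin N → ℝ) (q v z : Conf d N) : ℝ :=
  pairSum m fun i j => kernelHess (q i - q j) (v i - v j) (z i - z j)

/-- All mutual distances of `q` are at least `r`. -/
def Separated (r : ℝ) (q : Conf d N) : Prop := ∀ i j, i ≠ j → r ≤ ‖q i - q j‖

variable {m : Fin N → ℝ}

lemma U_eq_pairSum (m : Fin N → ℝ) (q : Conf d N) :
    U m q = pairSum m fun i j => ‖q i - q j‖⁻¹ := rfl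

lemma pairWeight_nonneg (hm : ∀ i, 0 < m i) : 0 ≤ pairWeight m :=
  Finset.sum_nonneg fun i _ => Finset.sum_nonneg fun j _ => (mul_pos (hm i) (hm j)).le

lemma pairSum_sub (α β : Fin N → Fin N → ℝ) :
    pairSum m (fun i j => α i j - β i j) = pairSum m α - pairSum m β := by
  simp only [pairSum, ← Finset.sum_sub_distrib]
  refine Finset.sum_congr rfl fun i _ => Finset.sum_congr rfl fun j _ => ?_
  split_ifs <;> ring

lemma pairSum_const_mul (c : ℝ) (α : Fin N → Fin N → ℝ) :
    pairSum m (fun i j => c * α i j) = c * pairSum m α := by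
  simp only [pairSum, Finset.mul_sum]
  refine Finset.sum_congr rfl fun i _ => Finset.sum_congr rfl fun j _ => ?_
  split_ifs <;> ring

lemma neg_le_pairSum (hm : ∀ i, 0 < m i) {α : Fin N → Fin N → ℝ} {B : ℝ} (hB : 0 ≤ B)
    (h : ∀ i j, i ≠ j → -B ≤ α i j) : -(pairWeight m * B) ≤ pairSum m α := by
  rw [pairWeight, Finset.sum_mul, ← Finset.sum_neg_distrib]
  refine Finset.sum_le_sum fun i _ => ?_
  rw [Finset.sum_mul, ← Finset.sum_neg_distrib]
  refine Finset.sum_le_sum fun j _ => ?_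
  have hij := mul_pos (hm i) (hm j)
  split_ifs with hlt
  · nlinarith [h i j hlt.ne]
  · nlinarith

lemma abs_pairSum_le (hm : ∀ i, 0 < m i) {α : Fin N → Fin N → ℝ} {B : ℝ} (hB : 0 ≤ B)
    (h : ∀ i j, i ≠ j → |α i j| ≤ B) : |pairSum m α| ≤ pairWeight m * B := by
  rw [abs_le]
  refine ⟨neg_le_pairSum hm hB fun i j hij => (abs_le.1 (h i j hij)).1, ?_⟩
  have h1 := neg_le_pairSum hm (α := fun i j => (-1) * α i j) hB
    fun i j hij => by linarith [(abs_le.1 (h i j hij)).2]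
  rw [pairSum_const_mul] at h1
  linarith

lemma norm_sub_le_two_mul (v : Conf d N) (i j : Fin N) : ‖v i - v j‖ ≤ 2 * ‖v‖ := by
  linarith [norm_sub_le (v i) (v j), norm_le_pi_norm v i, norm_le_pi_norm v j]

lemma not_collision_of_separated {r : ℝ} (hr : 0 < r) {q : Conf d N} (hq : Separated r q) :
    ¬ collision q := by
  rintro ⟨i, j, hij, h⟩
  have := hq i j hij
  rw [h, sub_self, norm_zero] at this
  linarith

lemma exists_separated {q : Conf d N} (hq : ¬ collision q) : ∃ r > 0, Separated r q := by
  have h : ∀ p : Fin N × Fin N, ∃ r > 0, p.1 ≠ p.2 → r ≤ ‖q p.1 - q p.2‖ := fun p => by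
    by_cases hp : p.1 = p.2
    · exact ⟨1, one_pos, fun h => absurd hp h⟩
    · refine ⟨‖q p.1 - q p.2‖, norm_pos_iff.2 (sub_ne_zero.2 fun h => hq ⟨_, _, hp, h⟩),
        fun _ => le_rfl⟩
  choose r hr hr' using h
  rcases isEmpty_or_nonempty (Fin N × Fin N) with he | hne
  · exact ⟨1, one_pos, fun i j _ => (he.false (i, j)).elim⟩
  · refine ⟨Finset.univ.inf' Finset.univ_nonempty r, ?_, fun i j hij => ?_⟩
    · exact (Finset.lt_inf'_iff _).2 fun p _ => hr p
    · exact (Finset.inf'_le r (Finset.mem_univ (i, j))).trans (hr' (i, j) hij)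

lemma Separated.add {r : ℝ} {q v : Conf d N} (hq : Separated r q) (hv : ‖v‖ ≤ r / 4) :
    Separated (r / 2) (q + v) := fun i j hij => by
  have h1 := hq i j hij
  have h2 := norm_sub_le_two_mul v i j
  have h3 := norm_sub_le ((q + v) i - (q + v) j) (v i - v j)
  have h4 : (q + v) i - (q + v) j - (v i - v j) = q i - q j := by
    simp only [Pi.add_apply]; abel
  rw [h4] at h3
  linarith

lemma abs_potDeriv_le (hm : ∀ i, 0 < m i) {r : ℝ} (hr : 0 < r) {q : Conf d N}
    (hq : Separated r q) (v : Conf d N) :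
    |potDeriv m q v| ≤ pairWeight m * (2 * ‖v‖ / r ^ 2) :=
  abs_pairSum_le hm (by positivity) fun i j hij =>
    (abs_kernelDeriv_le hr (hq i j hij) _).trans (by gcongr; exact norm_sub_le_two_mul v i j)

lemma abs_potHess_le (hm : ∀ i, 0 < m i) {r : ℝ} (hr : 0 < r) {q : Conf d N}
    (hq : Separated r q) (v z : Conf d N) :
    |potHess m q v z| ≤ pairWeight m * (16 * (‖v‖ * ‖z‖) / r ^ 3) :=
  abs_pairSum_le hm (by positivity) fun i j hij =>
    (abs_kernelHess_le hr (hq i j hij) _ _).trans <| by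
      calc 4 * (‖v i - v j‖ * ‖z i - z j‖) / r ^ 3
          ≤ 4 * ((2 * ‖v‖) * (2 * ‖z‖)) / r ^ 3 := by
            gcongr
            · exact norm_sub_le_two_mul v i j
            · exact norm_sub_le_two_mul z i j
        _ = _ := by ring

lemma abs_U_taylor_le (hm : ∀ i, 0 < m i) {r : ℝ} (hr : 0 < r) {q v : Conf d N}
    (hq : Separated r q) (hv : ‖v‖ ≤ r / 4) :
    |U m (q + v) - U m q - potDeriv m q v| ≤ pairWeight m * (12 * ‖v‖ ^ 2 / r ^ 3) := by
  rw [U_eq_pairSum, U_eq_pairSum, potDeriv, ← pairSum_sub, ← pairSum_sub]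
  refine abs_pairSum_le hm (by positivity) fun i j hij => ?_
  have hu := hq i j hij
  have hvij := norm_sub_le_two_mul v i j
  have e : (q + v) i - (q + v) j = (q i - q j) + (v i - v j) := by
    simp only [Pi.add_apply]; abel
  rw [e]
  refine (abs_inv_norm_taylor_le (hr.trans_le hu) (by linarith)).trans ?_
  calc 3 * ‖v i - v j‖ ^ 2 / ‖q i - q j‖ ^ 3 ≤ 3 * (2 * ‖v‖) ^ 2 / r ^ 3 := by gcongr
    _ = _ := by ring

lemma abs_potDeriv_taylor_le (hm : ∀ i, 0 < m i) {r : ℝ} (hr : 0 < r) {q v : Conf d N}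
    (hq : Separated r q) (hv : ‖v‖ ≤ r / 4) (z : Conf d N) :
    |potDeriv m (q + v) z - potDeriv m q z - potHess m q v z|
      ≤ pairWeight m * (328 * (‖v‖ ^ 2 * ‖z‖) / r ^ 4) := by
  rw [potDeriv, potDeriv, potHess, ← pairSum_sub, ← pairSum_sub]
  refine abs_pairSum_le hm (by positivity) fun i j hij => ?_
  have hu := hq i j hij
  have hvij := norm_sub_le_two_mul v i j
  have hzij := norm_sub_le_two_mul z i j
  have e : (q + v) i - (q + v) j = (q i - q j) + (v i - v j) := by
    simp only [Pi.add_apply]; abel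
  rw [e]
  refine (abs_kernelDeriv_taylor_le (hr.trans_le hu) (by linarith) _).trans ?_
  calc 41 * (‖v i - v j‖ ^ 2 * ‖z i - z j‖) / ‖q i - q j‖ ^ 4
      ≤ 41 * ((2 * ‖v‖) ^ 2 * (2 * ‖z‖)) / r ^ 4 := by gcongr
    _ = _ := by ring

/-- A lower bound for the increment of the potential that allows for collisions of `q + v`. -/
lemma neg_le_U_add_sub (hm : ∀ i, 0 < m i) {r : ℝ} (hr : 0 < r) {q : Conf d N}
    (hq : Separated r q) (v : Conf d N) :
    -(pairWeight m * (2 * ‖v‖ / r ^ 2)) ≤ U m (q + v) - U m q := by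
  rw [U_eq_pairSum, U_eq_pairSum, ← pairSum_sub]
  refine neg_le_pairSum hm (by positivity) fun i j hij => ?_
  have hu := hq i j hij
  have e : (q + v) i - (q + v) j = (q i - q j) + (v i - v j) := by
    simp only [Pi.add_apply]; abel
  rw [e]
  have hA : 0 < ‖q i - q j‖ := hr.trans_le hu
  have h1 : ‖v i - v j‖ / ‖q i - q j‖ ^ 2 ≤ 2 * ‖v‖ / r ^ 2 := by
    gcongr; exact norm_sub_le_two_mul v i j
  have hd := abs_norm_add_sub_norm_le (q i - q j) (v i - v j)
  set A := ‖q i - q j‖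
  set w := ‖v i - v j‖
  set B := ‖q i - q j + (v i - v j)‖ with hBdef
  have hw : 0 ≤ w := norm_nonneg _
  have hB0 : 0 ≤ B := norm_nonneg _
  suffices A⁻¹ - w / A ^ 2 ≤ B⁻¹ by linarith
  have hBA := abs_le.1 hd
  have e2 : A⁻¹ - w / A ^ 2 = (A - w) / A ^ 2 := by field_simp
  rw [e2]
  rcases hB0.eq_or_lt with h0 | hB
  · rw [← h0, inv_zero]
    exact div_nonpos_of_nonpos_of_nonneg (by linarith) (by positivity)
  · rw [inv_eq_one_div, div_le_div_iff₀ (by positivity) hB]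
    nlinarith [sq_nonneg (A - B)]

lemma abs_U_add_sub_le (hm : ∀ i, 0 < m i) {r : ℝ} (hr : 0 < r) {q v : Conf d N}
    (hq : Separated r q) (hqv : Separated r (q + v)) :
    |U m (q + v) - U m q| ≤ pairWeight m * (2 * ‖v‖ / r ^ 2) := by
  have h1 := neg_le_U_add_sub hm hr hq v
  have h2 := neg_le_U_add_sub hm hr hqv (-v)
  rw [add_neg_cancel_right, norm_neg] at h2
  exact abs_le.2 ⟨h1, by linarith⟩

lemma kernelHess_polarization {E : Type*} [NormedAddCommGroup E] [InnerProductSpace ℝ E]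
    (u v z : E) :
    kernelHess u (v + z) (v + z) - kernelHess u v v - kernelHess u z z
      = 2 * kernelHess u v z := by
  simp only [kernelHess, inner_add_left, inner_add_right, real_inner_comm v z]
  ring

lemma hessQ_eq_potHess {q : Conf d N} (hq : ¬ collision q) (v : Conf d N) :
    hessQ m q v = potHess m q v v := by
  have hne : ∀ i j : Fin N, i < j → q i - q j ≠ 0 := fun i j hij =>
    sub_ne_zero.2 fun h => hq ⟨i, j, hij.ne, h⟩
  have hline : ∀ s : ℝ, ∀ i j : Fin N, (q + s • v) i - (q + s • v) j
      = (q i - q j) + s • (v i - v j) := fun s i j => by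
    simp only [Pi.add_apply, Pi.smul_apply, smul_sub]; abel
  have hderiv : ∀ᶠ s in 𝓝 (0:ℝ), HasDerivAt (fun s : ℝ => U m (q + s • v))
      (potDeriv m (q + s • v) v) s := by
    have hnear : ∀ᶠ s in 𝓝 (0:ℝ), ∀ i j : Fin N, i < j →
        (q i - q j) + s • (v i - v j) ≠ 0 := by
      refine eventually_all.2 fun i => eventually_all.2 fun j => ?_
      by_cases hij : i < j
      · have hc : ContinuousAt (fun s : ℝ => (q i - q j) + s • (v i - v j)) 0 := by fun_prop
        filter_upwards [hc.eventually_ne (by simpa using hne i j hij)] with s hs _ using hs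
      · exact Eventually.of_forall fun s h => absurd h hij
    filter_upwards [hnear] with s hs
    simp only [U_eq_pairSum, potDeriv, pairSum, hline]
    refine HasDerivAt.fun_sum fun i _ => HasDerivAt.fun_sum fun j _ => ?_
    split_ifs with hij
    · exact (hasDerivAt_inv_norm_line (hs i j hij)).const_mul _
    · exact hasDerivAt_const _ _
  have h2 : HasDerivAt (fun s : ℝ => potDeriv m (q + s • v) v) (potHess m q v v) 0 := by
    simp only [potDeriv, potHess, pairSum, hline]
    refine HasDerivAt.fun_sum fun i _ => HasDerivAt.fun_sum fun j _ => ?_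
    split_ifs with hij
    · exact (hasDerivAt_kernelDeriv_line (hne i j hij)).const_mul _
    · exact hasDerivAt_const _ _
  rw [hessQ, iteratedDeriv_succ, iteratedDeriv_one]
  refine (h2.congr_of_eventuallyEq ?_).deriv
  filter_upwards [hderiv] with s hs using hs.deriv

lemma hessB_eq_potHess {q : Conf d N} (hq : ¬ collision q) (v z : Conf d N) :
    hessB m q v z = potHess m q v z := by
  rw [hessB, hessQ_eq_potHess hq, hessQ_eq_potHess hq, hessQ_eq_potHess hq]
  have : potHess m q (v + z) (v + z) - potHess m q v v - potHess m q z z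
      = 2 * potHess m q v z := by
    simp only [potHess]
    rw [← pairSum_sub, ← pairSum_sub, ← pairSum_const_mul]
    congr 1; ext i j
    rw [← kernelHess_polarization]
    simp only [Pi.add_apply, add_sub_add_comm]
  rw [this]; ring

lemma measurable_pairSum {α : Type*} [MeasurableSpace α] {F : Fin N → Fin N → α → ℝ}
    (hF : ∀ i j, Measurable (F i j)) : Measurable fun p => pairSum m fun i j => F i j p := by
  refine Finset.measurable_sum _ fun i _ => Finset.measurable_sum _ fun j _ => ?_
  split_ifs
  · exact (hF i j).const_mul _
  · exact measurable_const

lemma measurable_U : Measurable (U m : Conf d N → ℝ) :=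
  measurable_pairSum fun i j => by fun_prop

lemma measurable_potDeriv :
    Measurable fun p : Conf d N × Conf d N => potDeriv m p.1 p.2 :=
  measurable_pairSum fun i j => by unfold kernelDeriv; fun_prop

lemma measurable_potHess :
    Measurable fun p : Conf d N × Conf d N × Conf d N => potHess m p.1 p.2.1 p.2.2 :=
  measurable_pairSum fun i j => by unfold kernelHess; fun_prop

lemma tendsto_U_of_not_collision {ι : Type*} {l : Filter ι} {q : ι → Conf d N} {p : Conf d N}
    (hp : ¬ collision p) (hq : Tendsto q l (𝓝 p)) :
    Tendsto (fun n => U m (q n)) l (𝓝 (U m p)) := by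
  refine tendsto_finsetSum _ fun i _ => tendsto_finsetSum _ fun j _ => ?_
  split_ifs with hij
  · have hne : ‖p i - p j‖ ≠ 0 := norm_ne_zero_iff.2 <| sub_ne_zero.2 fun h => hp ⟨i, j, hij.ne, h⟩
    exact tendsto_const_nhds.div
      (((tendsto_pi_nhds.1 hq i).sub (tendsto_pi_nhds.1 hq j)).norm) hne
  · exact tendsto_const_nhds

/-- The potential blows up along collision-free configurations approaching a collision. -/
lemma tendsto_U_atTop_of_collision (hm : ∀ i, 0 < m i) {ι : Type*} {l : Filter ι}
    {q : ι → Conf d N} {p : Conf d N} (hp : collision p) (hq : Tendsto q l (𝓝 p))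
    (hqc : ∀ n, ¬ collision (q n)) : Tendsto (fun n => U m (q n)) l atTop := by
  obtain ⟨i, j, hlt, hij⟩ : ∃ i j, i < j ∧ p i = p j := by
    obtain ⟨i, j, hne, h⟩ := hp
    rcases hne.lt_or_gt with h1 | h1
    · exact ⟨i, j, h1, h⟩
    · exact ⟨j, i, h1, h.symm⟩
  have hnn : ∀ n, ∀ a b : Fin N,
      0 ≤ if a < b then m a * m b / ‖q n a - q n b‖ else 0 := fun n a b => by
    have := mul_pos (hm a) (hm b)
    split_ifs <;> positivity
  have hle : ∀ n, m i * m j / ‖q n i - q n j‖ ≤ U m (q n) := fun n => by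
    have h1 := Finset.single_le_sum (f := fun b => if i < b then m i * m b / ‖q n i - q n b‖ else 0)
      (fun b _ => hnn n i b) (Finset.mem_univ j)
    simp only [hlt, if_true] at h1
    exact h1.trans (Finset.single_le_sum
      (f := fun a => ∑ b, if a < b then m a * m b / ‖q n a - q n b‖ else 0)
      (fun a _ => Finset.sum_nonneg fun b _ => hnn n a b) (Finset.mem_univ i))
  refine tendsto_atTop_mono hle ?_
  have h0 : Tendsto (fun n => ‖q n i - q n j‖) l (𝓝[>] 0) := by
    refine tendsto_nhdsWithin_iff.2 ⟨?_, Eventually.of_forall fun n => ?_⟩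
    · have := ((tendsto_pi_nhds.1 hq i).sub (tendsto_pi_nhds.1 hq j)).norm
      simpa [hij] using this
    · exact norm_pos_iff.2 <| sub_ne_zero.2 fun h => hqc n ⟨i, j, hlt.ne, h⟩
  simp only [div_eq_mul_inv]
  exact (tendsto_inv_nhdsGT_zero.comp h0).const_mul_atTop (mul_pos (hm i) (hm j))

end Potential

section MassInner

variable {m : Fin N → ℝ}

lemma minner_comm (x y : Conf d N) : minner m x y = minner m y x := by
  simp only [minner, real_inner_comm]

lemma minner_add_left (x y z : Conf d N) : minner m (x + y) z = minner m x z + minner m y z := by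
  simp only [minner, Pi.add_apply, inner_add_left, mul_add, Finset.sum_add_distrib]

lemma minner_smul_left (c : ℝ) (x y : Conf d N) : minner m (c • x) y = c * minner m x y := by
  simp only [minner, Pi.smul_apply, real_inner_smul_left, Finset.mul_sum]
  exact Finset.sum_congr rfl fun i _ => by ring

lemma minner_sub_left (x y z : Conf d N) : minner m (x - y) z = minner m x z - minner m y z := by
  simp only [minner, Pi.sub_apply, inner_sub_left, mul_sub, Finset.sum_sub_distrib]

lemma minner_sub_right (x y z : Conf d N) : minner m x (y - z) = minner m x y - minner m x z := by
  rw [minner_comm, minner_sub_left, minner_comm y, minner_comm z]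

lemma minner_smul_right (c : ℝ) (x y : Conf d N) : minner m x (c • y) = c * minner m x y := by
  rw [minner_comm, minner_smul_left, minner_comm]

lemma minner_self_nonneg (hm : ∀ i, 0 < m i) (x : Conf d N) : 0 ≤ minner m x x :=
  Finset.sum_nonneg fun i _ => mul_nonneg (hm i).le real_inner_self_nonneg

lemma mnorm_sq (hm : ∀ i, 0 < m i) (x : Conf d N) : mnorm m x ^ 2 = minner m x x :=
  Real.sq_sqrt (minner_self_nonneg hm x)

lemma continuous_minner : Continuous fun p : Conf d N × Conf d N => minner m p.1 p.2 := by
  unfold minner; fun_prop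

lemma abs_minner_le (hm : ∀ i, 0 < m i) (x y : Conf d N) :
    |minner m x y| ≤ (∑ i, m i) * (‖x‖ * ‖y‖) := by
  rw [Finset.sum_mul]
  refine (Finset.abs_sum_le_sum_abs _ _).trans (Finset.sum_le_sum fun i _ => ?_)
  rw [abs_mul, abs_of_pos (hm i)]
  have h1 := norm_le_pi_norm x i
  have h2 := norm_le_pi_norm y i
  have := hm i
  calc m i * |⟪x i, y i⟫| ≤ m i * (‖x i‖ * ‖y i‖) := by
        gcongr; exact abs_real_inner_le_norm _ _
    _ ≤ m i * (‖x‖ * ‖y‖) := by gcongr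

/-- A constant bounding the square of the sup norm by the square of the mass norm. -/
def massConst (m : Fin N → ℝ) : ℝ := ∑ i, (m i)⁻¹

lemma massConst_nonneg (hm : ∀ i, 0 < m i) : 0 ≤ massConst m :=
  Finset.sum_nonneg fun i _ => (inv_pos.2 (hm i)).le

lemma norm_sq_le_minner (hm : ∀ i, 0 < m i) (x : Conf d N) :
    ‖x‖ ^ 2 ≤ massConst m * minner m x x := by
  have h0 : 0 ≤ massConst m * minner m x x :=
    mul_nonneg (massConst_nonneg hm) (minner_self_nonneg hm x)
  suffices ‖x‖ ≤ √(massConst m * minner m x x) by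
    calc ‖x‖ ^ 2 ≤ √(massConst m * minner m x x) ^ 2 := by gcongr
      _ = _ := Real.sq_sqrt h0
  refine (pi_norm_le_iff_of_nonneg (Real.sqrt_nonneg _)).2 fun i => Real.le_sqrt_of_sq_le ?_
  have h1 : m i * ⟪x i, x i⟫ ≤ minner m x x :=
    Finset.single_le_sum (f := fun i => m i * ⟪x i, x i⟫)
      (fun j _ => mul_nonneg (hm j).le real_inner_self_nonneg) (Finset.mem_univ i)
  have h2 : (m i)⁻¹ ≤ massConst m :=
    Finset.single_le_sum (f := fun i => (m i)⁻¹) (fun j _ => (inv_pos.2 (hm j)).le)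
      (Finset.mem_univ i)
  have hi := hm i
  have := massConst_nonneg hm
  calc ‖x i‖ ^ 2 = (m i)⁻¹ * (m i * ⟪x i, x i⟫) := by
        rw [real_inner_self_eq_norm_sq]; field_simp
    _ ≤ massConst m * minner m x x := by
        gcongr
        exact mul_nonneg hi.le real_inner_self_nonneg

end MassInner

section Primitive

variable {m : Fin N → ℝ} {f g : ℝ → Conf d N}

/-- Lebesgue measure on the half-line `(1, ∞)`. -/
abbrev halfLine : Measure ℝ := volume.restrict (Set.Ioi (1:ℝ))

/-- The primitive of `f` vanishing at time `1`. -/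
def prim (f : ℝ → Conf d N) (t : ℝ) : Conf d N := ∫ s in Set.Ioc (1:ℝ) t, f s

/-- The squared mass norm of `f` in `L²(1, ∞)`. -/
def energy (m : Fin N → ℝ) (f : ℝ → Conf d N) : ℝ := ∫ t in Set.Ioi (1:ℝ), minner m (f t) (f t)

lemma energy_nonneg (hm : ∀ i, 0 < m i) (f : ℝ → Conf d N) : 0 ≤ energy m f :=
  integral_nonneg fun _ => minner_self_nonneg hm _

lemma aestronglyMeasurable_minner {μ : Measure ℝ} (hf : AEStronglyMeasurable f μ)
    (hg : AEStronglyMeasurable g μ) : AEStronglyMeasurable (fun t => minner m (f t) (g t)) μ :=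
  (continuous_minner (m := m)).comp_aestronglyMeasurable (f := fun t => (f t, g t)) (hf.prodMk hg)

lemma integrable_minner (hm : ∀ i, 0 < m i) (hf : MemLp f 2 halfLine) (hg : MemLp g 2 halfLine) :
    Integrable (fun t => minner m (f t) (g t)) halfLine := by
  refine ((hf.norm.integrable_mul hg.norm).const_mul (∑ i, m i)).mono'
    (aestronglyMeasurable_minner hf.1 hg.1) (Eventually.of_forall fun t => ?_)
  exact abs_minner_le hm _ _

lemma memLp_of_integrable_minner (hm : ∀ i, 0 < m i) (hf : AEStronglyMeasurable f halfLine)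
    (h : Integrable (fun t => minner m (f t) (f t)) halfLine) : MemLp f 2 halfLine := by
  rw [memLp_two_iff_integrable_sq_norm hf]
  refine (h.const_mul (massConst m)).mono' (hf.norm.pow 2) (Eventually.of_forall fun t => ?_)
  rw [Real.norm_of_nonneg (by positivity)]
  exact norm_sq_le_minner hm _

lemma integrableOn_Ioc_of_memLp (hf : MemLp f 2 halfLine) (t : ℝ) :
    IntegrableOn f (Set.Ioc 1 t) := by
  have : MemLp f 2 (volume.restrict (Set.Ioc (1:ℝ) t)) :=
    hf.mono_measure (Measure.restrict_mono_set _ Ioc_subset_Ioi_self)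
  exact this.integrable one_le_two

lemma prim_add (hf : MemLp f 2 halfLine) (hg : MemLp g 2 halfLine) (t : ℝ) :
    prim (f + g) t = prim f t + prim g t :=
  integral_add (integrableOn_Ioc_of_memLp hf t) (integrableOn_Ioc_of_memLp hg t)

lemma prim_sub (hf : MemLp f 2 halfLine) (hg : MemLp g 2 halfLine) (t : ℝ) :
    prim (f - g) t = prim f t - prim g t :=
  integral_sub (integrableOn_Ioc_of_memLp hf t) (integrableOn_Ioc_of_memLp hg t)

lemma prim_smul (c : ℝ) (f : ℝ → Conf d N) (t : ℝ) : prim (c • f) t = c • prim f t :=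
  integral_smul c f

lemma prim_congr (h : f =ᵐ[halfLine] g) (t : ℝ) : prim f t = prim g t :=
  integral_congr_ae (ae_restrict_of_ae_restrict_of_subset Ioc_subset_Ioi_self h)

lemma prim_clm (L : Conf d N →L[ℝ] Conf d N) (hf : MemLp f 2 halfLine) (t : ℝ) :
    prim (fun s => L (f s)) t = L (prim f t) :=
  L.integral_comp_comm (integrableOn_Ioc_of_memLp hf t)

lemma norm_prim_le (hm : ∀ i, 0 < m i) (hf : MemLp f 2 halfLine) {t : ℝ} (ht : 1 ≤ t) :
    ‖prim f t‖ ≤ √(massConst m * energy m f) * √t := by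
  have hint := (integrableOn_Ioc_of_memLp hf t).norm
  have hsq : IntegrableOn (fun s => ‖f s‖ ^ 2) (Set.Ioi 1) :=
    (memLp_two_iff_integrable_sq_norm hf.1).1 hf
  have hsq' := hsq.mono_set (t := Set.Ioi 1) (s := Set.Ioc 1 t) Ioc_subset_Ioi_self
  set I := ∫ s in Set.Ioc (1:ℝ) t, ‖f s‖
  set S := ∫ s in Set.Ioc (1:ℝ) t, ‖f s‖ ^ 2
  have hI : ‖prim f t‖ ≤ I := norm_integral_le_integral_norm _
  have hSE : S ≤ massConst m * energy m f := by
    calc S ≤ ∫ s in Set.Ioi (1:ℝ), ‖f s‖ ^ 2 :=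
          setIntegral_mono_set hsq (Eventually.of_forall fun s => by positivity)
            Ioc_subset_Ioi_self.eventuallyLE
      _ ≤ ∫ s in Set.Ioi (1:ℝ), massConst m * minner m (f s) (f s) :=
          integral_mono hsq ((integrable_minner hm hf hf).const_mul _)
            fun s => norm_sq_le_minner hm _
      _ = _ := integral_const_mul _ _
  have ht0 : 0 < t := by linarith
  have key : I ^ 2 ≤ S * t := by
    have h1 : 0 ≤ ∫ s in Set.Ioc (1:ℝ) t, (‖f s‖ - I / t) ^ 2 :=
      integral_nonneg fun s => sq_nonneg _
    have hc : IntegrableOn (fun _ : ℝ => (I / t) ^ 2) (Set.Ioc 1 t) :=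
      integrableOn_const measure_Ioc_lt_top.ne
    have h2 : ∫ s in Set.Ioc (1:ℝ) t, (‖f s‖ - I / t) ^ 2
        = S - 2 * (I / t) * I + (t - 1) * (I / t) ^ 2 := by
      have e : ∀ s, (‖f s‖ - I / t) ^ 2 = ‖f s‖ ^ 2 - 2 * (I / t) * ‖f s‖ + (I / t) ^ 2 :=
        fun s => by ring
      have hsub : IntegrableOn (fun s => ‖f s‖ ^ 2 - 2 * (I / t) * ‖f s‖) (Set.Ioc 1 t) :=
        hsq'.sub (hint.const_mul _)
      simp only [e]
      rw [integral_add hsub hc, integral_sub hsq' (hint.const_mul _),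
        integral_const_mul, setIntegral_const]
      simp [measureReal_def, ht]
      rfl
    rw [h2] at h1
    have h3 : 0 ≤ S - I ^ 2 / t := by
      have : S - 2 * (I / t) * I + (t - 1) * (I / t) ^ 2 = S - I ^ 2 / t - (I / t) ^ 2 := by
        field_simp; ring
      nlinarith [sq_nonneg (I / t)]
    rw [sub_nonneg, div_le_iff₀ ht0] at h3
    exact h3
  rw [← Real.sqrt_mul' _ ht0.le]
  refine hI.trans (Real.le_sqrt_of_sq_le (key.trans ?_))
  gcongr

lemma continuousOn_prim (hf : MemLp f 2 halfLine) : ContinuousOn (prim f) (Set.Ici 1) := by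
  intro t ht
  have h1 : IntegrableOn f (Set.Icc 1 (t + 1)) :=
    (integrableOn_Icc_iff_integrableOn_Ioc).2 (integrableOn_Ioc_of_memLp hf _)
  have h2 := intervalIntegral.continuousOn_primitive h1 t ⟨ht, by linarith⟩
  refine h2.mono_of_mem_nhdsWithin ?_
  refine mem_nhdsWithin.2 ⟨Set.Iio (t + 1), isOpen_Iio, by simp, ?_⟩
  rintro s ⟨hs1, hs2⟩
  exact ⟨hs2, le_of_lt hs1⟩

lemma aestronglyMeasurable_prim (hf : MemLp f 2 halfLine) :
    AEStronglyMeasurable (prim f) halfLine :=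
  ((continuousOn_prim hf).mono Ioi_subset_Ici_self).aestronglyMeasurable measurableSet_Ioi

lemma energy_eq_zero (hm : ∀ i, 0 < m i) (hf : MemLp f 2 halfLine) (h : energy m f = 0) (t : ℝ)
    (ht : 1 ≤ t) : prim f t = 0 := by
  have := norm_prim_le hm hf ht
  rw [h, mul_zero, Real.sqrt_zero, zero_mul] at this
  exact norm_le_zero_iff.1 this

lemma energy_smul (c : ℝ) (f : ℝ → Conf d N) : energy m (c • f) = c ^ 2 * energy m f := by
  rw [energy, energy, ← integral_const_mul]
  refine integral_congr_ae (Eventually.of_forall fun t => ?_)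
  simp only [Pi.smul_apply, minner_smul_left, minner_smul_right]; ring

lemma energy_sub (hm : ∀ i, 0 < m i) (hf : MemLp f 2 halfLine) (hg : MemLp g 2 halfLine) :
    energy m (f - g) = energy m f - 2 * (∫ t in Set.Ioi (1:ℝ), minner m (f t) (g t))
      + energy m g := by
  have hff := integrable_minner hm hf hf
  have hfg := integrable_minner hm hf hg
  have hgg := integrable_minner hm hg hg
  have hsub : Integrable (fun t => minner m (f t) (f t) - 2 * minner m (f t) (g t)) halfLine :=
    hff.sub (hfg.const_mul 2)
  rw [energy, energy, energy, ← integral_const_mul, ← integral_sub hff (hfg.const_mul 2),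
    ← integral_add hsub hgg]
  refine integral_congr_ae (Eventually.of_forall fun t => ?_)
  simp only [Pi.sub_apply, minner_sub_left, minner_sub_right, minner_comm (g t) (f t)]; ring

end Primitive

section WeakCompactness

/-- Bounded sequences in a separable Hilbert space have weakly convergent subsequences. -/
lemma exists_weakly_convergent_subseq {H : Type*} [NormedAddCommGroup H] [InnerProductSpace ℝ H]
    [CompleteSpace H] [TopologicalSpace.SeparableSpace H] (u : ℕ → H) {C : ℝ}
    (hu : ∀ n, ‖u n‖ ≤ C) :
    ∃ (v : H) (σ : ℕ → ℕ), StrictMono σ ∧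
      ∀ g : H, Tendsto (fun n => ⟪u (σ n), g⟫) atTop (𝓝 ⟪v, g⟫) := by
  have hmem : ∀ n, StrongDual.toWeakDual (InnerProductSpace.toDual ℝ H (u n)) ∈
      (WeakDual.toStrongDual ⁻¹' Metric.closedBall (0 : StrongDual ℝ H) C) := fun n => by
    simpa using hu n
  obtain ⟨ℓ, -, σ, hσ, hlim⟩ := WeakDual.isSeqCompact_closedBall ℝ H 0 C hmem
  refine ⟨(InnerProductSpace.toDual ℝ H).symm (WeakDual.toStrongDual ℓ), σ, hσ, fun g => ?_⟩
  have := ((WeakDual.eval_continuous g).tendsto ℓ).comp hlim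
  rw [InnerProductSpace.toDual_symm_apply]
  exact this

variable {m : Fin N → ℝ}

/-- The Euclidean space in which the mass inner product becomes the standard one. -/
abbrev MassSpace (d N : ℕ) := PiLp 2 fun _ : Fin N => EuclideanSpace ℝ (Fin d)

/-- Componentwise scaling, as a map from configurations to the Euclidean space. -/
def scaleTo (c : Fin N → ℝ) : Conf d N →L[ℝ] MassSpace d N :=
  (PiLp.continuousLinearEquiv 2 ℝ
    fun _ : Fin N => EuclideanSpace ℝ (Fin d)).symm.toContinuousLinearMap.comp
    (ContinuousLinearMap.pi fun i => c i • ContinuousLinearMap.proj i)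

/-- Componentwise scaling, as a map from the Euclidean space to configurations. -/
def scaleFrom (c : Fin N → ℝ) : MassSpace d N →L[ℝ] Conf d N :=
  (ContinuousLinearMap.pi fun i => c i • ContinuousLinearMap.proj i).comp
    (PiLp.continuousLinearEquiv 2 ℝ fun _ : Fin N => EuclideanSpace ℝ (Fin d)).toContinuousLinearMap

lemma inner_scaleTo (hm : ∀ i, 0 < m i) (x y : Conf d N) :
    ⟪scaleTo (fun i => √(m i)) x, scaleTo (fun i => √(m i)) y⟫ = minner m x y := by
  rw [PiLp.inner_apply, minner]
  refine Finset.sum_congr rfl fun i _ => ?_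
  simp only [scaleTo, ContinuousLinearMap.comp_apply]
  change ⟪√(m i) • x i, √(m i) • y i⟫ = _
  rw [real_inner_smul_left, real_inner_smul_right, ← mul_assoc, Real.mul_self_sqrt (hm i).le]

lemma scaleTo_scaleFrom (hm : ∀ i, 0 < m i) (y : MassSpace d N) :
    scaleTo (fun i => √(m i)) (scaleFrom (fun i => (√(m i))⁻¹) y) = y := by
  ext1 i
  change √(m i) • ((√(m i))⁻¹ • y i) = y i
  rw [smul_smul, mul_inv_cancel₀ (Real.sqrt_pos.2 (hm i)).ne', one_smul]

lemma exists_weak_limit (hm : ∀ i, 0 < m i) (f : ℕ → ℝ → Conf d N)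
    (hf : ∀ n, MemLp (f n) 2 halfLine) {C : ℝ} (hC : ∀ n, energy m (f n) ≤ C) :
    ∃ (w : ℝ → Conf d N) (σ : ℕ → ℕ), MemLp w 2 halfLine ∧ StrictMono σ ∧
      ∀ g : ℝ → Conf d N, MemLp g 2 halfLine →
        Tendsto (fun n => ∫ t in Set.Ioi (1:ℝ), minner m (f (σ n) t) (g t)) atTop
          (𝓝 (∫ t in Set.Ioi (1:ℝ), minner m (w t) (g t))) := by
  set S : Conf d N →L[ℝ] MassSpace d N := scaleTo fun i => √(m i)
  have hS : ∀ {h : ℝ → Conf d N}, MemLp h 2 halfLine → MemLp (fun t => S (h t)) 2 halfLine :=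
    fun hh => S.comp_memLp' hh
  have hinner : ∀ {h k : ℝ → Conf d N} (hh : MemLp h 2 halfLine) (hk : MemLp k 2 halfLine),
      ⟪(hS hh).toLp _, (hS hk).toLp _⟫ = ∫ t in Set.Ioi (1:ℝ), minner m (h t) (k t) := by
    intro h k hh hk
    rw [L2.inner_def]
    refine integral_congr_ae ?_
    filter_upwards [(hS hh).coeFn_toLp, (hS hk).coeFn_toLp] with t h1 h2
    rw [h1, h2, inner_scaleTo hm]
  have : Fact ((2:ℝ≥0∞) ≠ ∞) := ⟨by simp⟩
  obtain ⟨v, σ, hσ, hv⟩ := exists_weakly_convergent_subseq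
    (fun n => (hS (hf n)).toLp _) (C := √C) fun n => by
      refine Real.le_sqrt_of_sq_le ?_
      rw [← real_inner_self_eq_norm_sq, hinner (hf n) (hf n)]
      exact hC n
  have hw : MemLp (fun t => scaleFrom (fun i => (√(m i))⁻¹) (v t)) 2 halfLine :=
    (scaleFrom (fun i => (√(m i))⁻¹)).comp_memLp' (Lp.memLp v)
  refine ⟨_, σ, hw, hσ, fun g hg => ?_⟩
  have h1 := hv ((hS hg).toLp _)
  have h2 : (hS hw).toLp _ = v := by
    refine Lp.ext ((hS hw).coeFn_toLp.trans (Eventually.of_forall fun t => ?_))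
    exact scaleTo_scaleFrom hm _
  rw [← h2, hinner hw hg] at h1
  simpa only [hinner (hf _) hg] using h1

lemma tendsto_prim_of_weak (hm : ∀ i, 0 < m i) {f : ℕ → ℝ → Conf d N} {w : ℝ → Conf d N}
    (hf : ∀ n, MemLp (f n) 2 halfLine) (hw : MemLp w 2 halfLine)
    (h : ∀ g : ℝ → Conf d N, MemLp g 2 halfLine →
        Tendsto (fun n => ∫ t in Set.Ioi (1:ℝ), minner m (f n t) (g t)) atTop
          (𝓝 (∫ t in Set.Ioi (1:ℝ), minner m (w t) (g t)))) (t : ℝ) :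
    Tendsto (fun n => prim (f n) t) atTop (𝓝 (prim w t)) := by
  have hind : ∀ e : Conf d N, MemLp ((Set.Ioc 1 t).indicator fun _ => e) 2 halfLine := fun e =>
    memLp_indicator_const 2 measurableSet_Ioc e
      (Or.inr ((Measure.restrict_apply_le _ _).trans_lt measure_Ioc_lt_top).ne)
  have hval : ∀ (e : Conf d N) {k : ℝ → Conf d N}, MemLp k 2 halfLine →
      ∫ s in Set.Ioi (1:ℝ), minner m (k s) ((Set.Ioc 1 t).indicator (fun _ => e) s)
        = minner m (prim k t) e := by
    intro e k hk
    have e1 : ∀ s, minner m (k s) ((Set.Ioc 1 t).indicator (fun _ => e) s)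
        = (Set.Ioc 1 t).indicator (fun s => minner m (k s) e) s := fun s => by
      by_cases hs : s ∈ Set.Ioc 1 t
      · simp [hs]
      · simp [hs, minner]
    simp only [e1]
    rw [setIntegral_indicator measurableSet_Ioc,
      Set.inter_eq_self_of_subset_right Ioc_subset_Ioi_self]
    let L : Conf d N →ₗ[ℝ] ℝ :=
      { toFun := fun x => minner m x e
        map_add' := fun x y => minner_add_left x y e
        map_smul' := fun c x => minner_smul_left c x e }
    exact L.toContinuousLinearMap.integral_comp_comm (integrableOn_Ioc_of_memLp hk t)
  refine tendsto_pi_nhds.2 fun i => ?_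
  rw [(PiLp.continuousLinearEquiv 2 ℝ
    (fun _ : Fin d => ℝ)).toHomeomorph.isInducing.tendsto_nhds_iff]
  refine tendsto_pi_nhds.2 fun k => ?_
  have h1 := h _ (hind (Pi.single i (EuclideanSpace.single k (m i)⁻¹)))
  simp only [hval _ (hf _), hval _ hw] at h1
  have hc : ∀ x : Conf d N, minner m x (Pi.single i (EuclideanSpace.single k (m i)⁻¹)) = x i k := by
    intro x
    rw [minner, Finset.sum_eq_single i]
    · rw [Pi.single_eq_same, EuclideanSpace.inner_single_right]
      have := (hm i).ne'
      simp; field_simp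
    · intro j _ hj
      rw [Pi.single_eq_of_ne hj, inner_zero_right, mul_zero]
    · simp
  simp only [hc] at h1
  exact h1

end WeakCompactness

section Decay

/-- The weight `t ^ (-3/2)` dominating all the integrands that occur along hyperbolic motions. -/
def decay (t : ℝ) : ℝ := √t / t ^ 2

lemma integrable_decay : Integrable decay halfLine := by
  have h : IntegrableOn (fun t : ℝ => t ^ (-(3 / 2) : ℝ)) (Set.Ioi 1) :=
    integrableOn_Ioi_rpow_of_lt (by norm_num) one_pos
  refine h.congr_fun (fun t ht => ?_) measurableSet_Ioi
  have ht0 : (0:ℝ) < t := one_pos.trans ht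
  rw [decay, Real.sqrt_eq_rpow, ← Real.rpow_natCast t 2, ← Real.rpow_sub ht0]
  norm_num

lemma sqrt_sq_div_cube_le_decay {t : ℝ} (ht : 1 ≤ t) : √t ^ 2 / t ^ 3 ≤ decay t := by
  have ht0 : 0 < t := one_pos.trans_le ht
  have h1 : 1 ≤ √t := Real.one_le_sqrt.2 ht
  rw [Real.sq_sqrt ht0.le, decay, div_le_div_iff₀ (by positivity) (by positivity)]
  nlinarith [mul_nonneg (sub_nonneg.2 h1) (pow_pos ht0 3).le]

lemma sqrt_cube_div_le_decay {t : ℝ} (ht : 1 ≤ t) : √t ^ 3 / t ^ 4 ≤ decay t := by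
  have ht0 : 0 < t := one_pos.trans_le ht
  have h1 : √t ^ 3 = t * √t := by
    rw [pow_succ, Real.sq_sqrt ht0.le]
  rw [h1, decay, div_le_div_iff₀ (by positivity) (by positivity)]
  have : t ^ 3 ≤ t ^ 4 := pow_le_pow_right₀ ht (by norm_num)
  nlinarith [mul_le_mul_of_nonneg_left this (Real.sqrt_nonneg t)]

lemma sqrt_le_self_of_one_le {t : ℝ} (ht : 1 ≤ t) : √t ≤ t :=
  (Real.sqrt_le_left (by linarith)).2 (by nlinarith)

end Decay

section Action

variable {m : Fin N → ℝ} {a x : Conf d N} {f g : ℝ → Conf d N}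

lemma timeSet_one_top : timeSet 1 ⊤ = Set.Ioi (1:ℝ) := by
  ext t; simp [timeSet, EReal.coe_lt_top]

/-- Square integrable velocities of curves of `D₀^{1,2}(1,+∞)`. -/
def Admissible (m : Fin N → ℝ) (f : ℝ → Conf d N) : Prop :=
  MemLp f 2 halfLine ∧ ∀ t, 1 ≤ t → inX m (prim f t)

/-- The motion with velocity `a + f` starting from `x` at time `1`. -/
def motion (a x : Conf d N) (f : ℝ → Conf d N) : ℝ → Conf d N := hypCurve a x (prim f)

/-- The renormalized potential along the motion. -/
def renPot (m : Fin N → ℝ) (a x : Conf d N) (f : ℝ → Conf d N) (t : ℝ) : ℝ :=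
  U m (motion a x f t) - U m (t • a)

lemma InD.memLp (hm : ∀ i, 0 < m i) {φ φ' : ℝ → Conf d N} (h : InD m 1 ⊤ φ φ') :
    MemLp φ' 2 halfLine := by
  obtain ⟨-, -, -, h4, h5⟩ := h
  refine memLp_of_integrable_minner hm ?_ ?_
  · have hU : Set.Ioi (1:ℝ) = ⋃ n : ℕ, Set.Ioc (1:ℝ) (n + 1) := by
      ext t
      simp only [Set.mem_Ioi, Set.mem_iUnion, Set.mem_Ioc, exists_and_left]
      refine ⟨fun ht => ⟨ht, ?_⟩, fun ht => ht.1⟩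
      obtain ⟨n, hn⟩ := exists_nat_ge t
      exact ⟨n, by linarith⟩
    rw [halfLine, hU, aestronglyMeasurable_iUnion_iff]
    exact fun n => (h4 _ (by linarith [(Nat.cast_nonneg n : (0:ℝ) ≤ n)]) (EReal.coe_lt_top _)).1
  · rw [timeSet_one_top] at h5
    simpa only [mnorm_sq hm, IntegrableOn] using h5

lemma InD.eq_prim {φ φ' : ℝ → Conf d N} (h : InD m 1 ⊤ φ φ') {t : ℝ} (ht : 1 ≤ t) :
    φ t = prim φ' t := h.2.2.1 t ht (EReal.coe_lt_top _)

lemma InD.admissible (hm : ∀ i, 0 < m i) {φ φ' : ℝ → Conf d N} (h : InD m 1 ⊤ φ φ') :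
    Admissible m φ' :=
  ⟨h.memLp hm, fun t ht => h.eq_prim ht ▸ h.2.1 t ht (EReal.coe_lt_top _)⟩

lemma Admissible.inD (hm : ∀ i, 0 < m i) (h : Admissible m f) : InD m 1 ⊤ (prim f) f := by
  refine ⟨by simp [prim], fun t ht _ => h.2 t ht, fun t _ _ => rfl,
    fun t _ _ => integrableOn_Ioc_of_memLp h.1 t, ?_⟩
  rw [timeSet_one_top]
  simpa only [mnorm_sq hm, IntegrableOn] using integrable_minner hm h.1 h.1

lemma InD.hypAction_eq {φ φ' : ℝ → Conf d N} (h : InD m 1 ⊤ φ φ') :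
    hypAction m a x ⊤ φ φ' = hypAction m a x ⊤ (prim φ') φ' := by
  have hc : ∀ t ∈ Set.Ioi (1:ℝ), hypCurve a x φ t = hypCurve a x (prim φ') t := fun t ht => by
    rw [hypCurve, hypCurve, h.eq_prim (le_of_lt ht)]
  have hi : ∀ t ∈ Set.Ioi (1:ℝ),
      hypIntegrand m a x φ φ' t = hypIntegrand m a x (prim φ') φ' t := fun t ht => by
    rw [hypIntegrand, hypIntegrand, hc t ht]
  have h1 : IntegrableOn (hypIntegrand m a x φ φ') (Set.Ioi 1)
      ↔ IntegrableOn (hypIntegrand m a x (prim φ') φ') (Set.Ioi 1) :=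
    integrableOn_congr_fun hi measurableSet_Ioi
  have h2 : (∀ᵐ t ∂volume.restrict (Set.Ioi (1:ℝ)), ¬ collision (hypCurve a x φ t))
      ↔ ∀ᵐ t ∂volume.restrict (Set.Ioi (1:ℝ)), ¬ collision (hypCurve a x (prim φ') t) := by
    refine eventually_congr ?_
    filter_upwards [ae_restrict_mem measurableSet_Ioi] with t ht
    rw [hc t ht]
  simp only [hypAction, timeSet_one_top, h1, h2, setIntegral_congr_fun measurableSet_Ioi hi]

lemma hypIntegrand_eq (hm : ∀ i, 0 < m i) (f : ℝ → Conf d N) :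
    hypIntegrand m a x (prim f) f = fun t => 1 / 2 * minner m (f t) (f t) + renPot m a x f t := by
  ext t
  rw [hypIntegrand, mnorm_sq hm, renPot, motion]; ring

lemma hypAction_eq_coe (hm : ∀ i, 0 < m i) (hf : MemLp f 2 halfLine)
    (hpot : Integrable (renPot m a x f) halfLine)
    (hcol : ∀ᵐ t ∂halfLine, ¬ collision (motion a x f t)) :
    hypAction m a x ⊤ (prim f) f
      = ((1 / 2 * energy m f + ∫ t in Set.Ioi (1:ℝ), renPot m a x f t : ℝ) : EReal) := by
  have hE := (integrable_minner hm hf hf).const_mul (1 / 2)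
  rw [hypAction, timeSet_one_top, hypIntegrand_eq hm, if_pos ⟨hE.add hpot, hcol⟩,
    integral_add hE hpot, integral_const_mul, energy]

/-- A velocity is minimizing if its primitive minimizes the renormalized action. -/
def Minimizing (m : Fin N → ℝ) (a x : Conf d N) (f : ℝ → Conf d N) : Prop :=
  Admissible m f ∧ hypAction m a x ⊤ (prim f) f = hypInf m a x ⊤

lemma hypInf_le (hm : ∀ i, 0 < m i) (hf : Admissible m f) :
    hypInf m a x ⊤ ≤ hypAction m a x ⊤ (prim f) f :=
  iInf_le_of_le _ (iInf_le_of_le _ (iInf_le_of_le (hf.inD hm) le_rfl))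

/-- A constant controlling the deviation of the motion from `t ↦ t • a`. -/
def devConst (m : Fin N → ℝ) (a x : Conf d N) (E : ℝ) : ℝ := √(massConst m * E) + ‖x - a‖

lemma devConst_nonneg (m : Fin N → ℝ) (a x : Conf d N) (E : ℝ) : 0 ≤ devConst m a x E :=
  add_nonneg (Real.sqrt_nonneg _) (norm_nonneg _)

lemma motion_eq (a x : Conf d N) (f : ℝ → Conf d N) (t : ℝ) :
    motion a x f t = t • a + (prim f t + (x - a)) := by
  rw [motion, hypCurve]; abel

lemma norm_prim_add_le (hm : ∀ i, 0 < m i) (hf : MemLp f 2 halfLine) {t : ℝ} (ht : 1 ≤ t) :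
    ‖prim f t + (x - a)‖ ≤ devConst m a x (energy m f) * √t := by
  have h1 : 1 ≤ √t := Real.one_le_sqrt.2 ht
  rw [devConst, add_mul]
  refine (norm_add_le _ _).trans (add_le_add (norm_prim_le hm hf ht) ?_)
  exact le_mul_of_one_le_right (norm_nonneg _) h1

lemma Separated.smul {r t : ℝ} (ht : 0 ≤ t) {q : Conf d N} (hq : Separated r q) :
    Separated (r * t) (t • q) := fun i j hij => by
  rw [Pi.smul_apply, Pi.smul_apply, ← smul_sub, norm_smul, Real.norm_of_nonneg ht, mul_comm]
  exact mul_le_mul_of_nonneg_left (hq i j hij) ht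

lemma Separated.mono {r s : ℝ} {q : Conf d N} (hq : Separated r q) (h : s ≤ r) :
    Separated s q := fun i j hij => h.trans (hq i j hij)

lemma continuousOn_motion (hf : MemLp f 2 halfLine) :
    ContinuousOn (motion a x f) (Set.Ici 1) := by
  have := continuousOn_prim hf
  have h : motion a x f = fun t => t • a + (prim f t + (x - a)) := funext (motion_eq a x f)
  rw [h]; fun_prop

lemma aemeasurable_motion (hf : MemLp f 2 halfLine) : AEMeasurable (motion a x f) halfLine :=
  (((continuousOn_motion hf).mono Ioi_subset_Ici_self).aestronglyMeasurable
    measurableSet_Ioi).aemeasurable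

/-- Collision-free motions have linearly growing mutual distances. -/
lemma exists_separated_motion (hm : ∀ i, 0 < m i) (ha : ¬ collision a) (hf : MemLp f 2 halfLine)
    (hcol : ∀ t, 1 ≤ t → ¬ collision (motion a x f t)) :
    ∃ c > 0, ∀ t, 1 ≤ t → Separated (c * t) (motion a x f t) := by
  obtain ⟨r, hr, hra⟩ := exists_separated ha
  set K := devConst m a x (energy m f)
  have hK : 0 ≤ K := devConst_nonneg _ _ _ _
  set T := max 1 ((4 * K / r) ^ 2)
  have hpair : ∀ i j : Fin N, ∀ᶠ c in 𝓝[>] (0:ℝ), i ≠ j →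
      ∀ t, 1 ≤ t → c * t ≤ ‖motion a x f t i - motion a x f t j‖ := by
    intro i j
    by_cases hij : i = j
    · exact Eventually.of_forall fun c h => absurd hij h
    have hcont : ContinuousOn (fun t => ‖motion a x f t i - motion a x f t j‖) (Set.Icc 1 T) := by
      have h0 : ContinuousOn (motion a x f) (Set.Icc 1 T) :=
        (continuousOn_motion hf).mono Set.Icc_subset_Ici_self
      exact ((continuousOn_pi.1 h0 i).sub (continuousOn_pi.1 h0 j)).norm
    obtain ⟨s, hs, hmin⟩ := isCompact_Icc.exists_isMinOn ⟨1, le_rfl, le_max_left _ _⟩ hcont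
    have hpos : 0 < ‖motion a x f s i - motion a x f s j‖ :=
      norm_pos_iff.2 (sub_ne_zero.2 fun h => hcol s hs.1 ⟨i, j, hij, h⟩)
    set δ := ‖motion a x f s i - motion a x f s j‖
    have hT : 0 < T := one_pos.trans_le (le_max_left _ _)
    have hc0 : 0 < min (r / 2) (δ / T) := lt_min (by positivity) (by positivity)
    filter_upwards [Ioo_mem_nhdsGT hc0] with c hc _ t ht
    have ht0 : 0 < t := one_pos.trans_le ht
    rcases le_total t T with htT | hTt
    · calc c * t ≤ δ / T * T := by
            have := (hc.2.trans_le (min_le_right _ _)).le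
            have := hc.1.le
            gcongr
        _ = δ := div_mul_cancel₀ _ hT.ne'
        _ ≤ _ := hmin ⟨ht, htT⟩
    · have h1 : 4 * K / r ≤ √t := Real.le_sqrt_of_sq_le ((le_max_right _ _).trans hTt)
      have h2 : 4 * K * √t ≤ r * t := by
        rw [div_le_iff₀ hr] at h1
        calc 4 * K * √t ≤ √t * r * √t := by gcongr
          _ = r * t := by rw [mul_right_comm, Real.mul_self_sqrt ht0.le]; ring
      have h3 := hra.smul ht0.le i j hij
      have h4 := norm_sub_le_two_mul (prim f t + (x - a)) i j
      have h5 := norm_prim_add_le (a := a) (x := x) hm hf ht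
      have h6 := norm_sub_le (motion a x f t i - motion a x f t j)
        ((prim f t + (x - a)) i - (prim f t + (x - a)) j)
      have h7 : motion a x f t i - motion a x f t j
          - ((prim f t + (x - a)) i - (prim f t + (x - a)) j) = (t • a) i - (t • a) j := by
        simp only [motion_eq, Pi.add_apply]; abel
      rw [h7] at h6
      have h8 : c * t ≤ r / 2 * t := by
        have := (hc.2.trans_le (min_le_left _ _)).le
        gcongr
      change ‖prim f t + (x - a)‖ ≤ K * √t at h5
      nlinarith
  have hall : ∀ᶠ c in 𝓝[>] (0:ℝ), ∀ i j : Fin N, i ≠ j →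
      ∀ t, 1 ≤ t → c * t ≤ ‖motion a x f t i - motion a x f t j‖ :=
    eventually_all.2 fun i => eventually_all.2 fun j => hpair i j
  obtain ⟨c, hc, hc0⟩ := (hall.and self_mem_nhdsWithin).exists
  exact ⟨c, hc0, fun t ht i j hij => hc i j hij t ht⟩

lemma aestronglyMeasurable_renPot (hf : MemLp f 2 halfLine) :
    AEStronglyMeasurable (renPot m a x f) halfLine := by
  have h1 := (measurable_U (m := m)).comp_aemeasurable (aemeasurable_motion (a := a) (x := x) hf)
  have h2 : Measurable fun t : ℝ => U m (t • a) := measurable_U.comp (by fun_prop)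
  exact (h1.sub h2.aemeasurable).aestronglyMeasurable

lemma integrable_renPot (hm : ∀ i, 0 < m i) (ha : ¬ collision a) (hf : MemLp f 2 halfLine)
    {c : ℝ} (hc : 0 < c) (hsep : ∀ t, 1 ≤ t → Separated (c * t) (motion a x f t)) :
    Integrable (renPot m a x f) halfLine := by
  obtain ⟨r, hr, hra⟩ := exists_separated ha
  set K := devConst m a x (energy m f)
  have hK : 0 ≤ K := devConst_nonneg _ _ _ _
  set b := min c r
  have hb : 0 < b := lt_min hc hr
  have hw := pairWeight_nonneg hm
  refine (integrable_decay.const_mul (pairWeight m * (2 * K / b ^ 2))).mono'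
    (aestronglyMeasurable_renPot hf) ?_
  filter_upwards [ae_restrict_mem measurableSet_Ioi] with t ht
  have ht1 : (1:ℝ) ≤ t := le_of_lt ht
  have ht0 : 0 < t := one_pos.trans_le ht1
  have h1 : Separated (b * t) (t • a) :=
    (hra.smul ht0.le).mono (by gcongr; exact min_le_right _ _)
  have h2 : Separated (b * t) (t • a + (prim f t + (x - a))) := by
    rw [← motion_eq]
    exact (hsep t ht1).mono (by gcongr; exact min_le_left _ _)
  have h3 := abs_U_add_sub_le hm (mul_pos hb ht0) h1 h2
  rw [← motion_eq] at h3
  refine h3.trans ?_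
  calc _ ≤ pairWeight m * (2 * (K * √t) / (b * t) ^ 2) := by
        gcongr; exact norm_prim_add_le hm hf ht1
    _ = _ := by rw [decay]; field_simp

lemma Minimizing.hypInf_eq (hm : ∀ i, 0 < m i) (ha : ¬ collision a) (hf : Minimizing m a x f)
    (hcol : ∀ t, 1 ≤ t → ¬ collision (motion a x f t)) :
    Integrable (renPot m a x f) halfLine ∧ hypInf m a x ⊤
      = ((1 / 2 * energy m f + ∫ t in Set.Ioi (1:ℝ), renPot m a x f t : ℝ) : EReal) := by
  obtain ⟨c, hc, hsep⟩ := exists_separated_motion hm ha hf.1.1 hcol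
  have hint := integrable_renPot hm ha hf.1.1 hc hsep
  refine ⟨hint, ?_⟩
  rw [← hf.2, hypAction_eq_coe hm hf.1.1 hint]
  filter_upwards [ae_restrict_mem measurableSet_Ioi] with t ht using hcol t (le_of_lt ht)

end Action

section Center

variable {m : Fin N → ℝ}

/-- The projection of a configuration onto the zero-barycenter space. -/
def center (m : Fin N → ℝ) : Conf d N →L[ℝ] Conf d N :=
  LinearMap.toContinuousLinearMap
    { toFun := fun x i => x i - (∑ j, m j)⁻¹ • ∑ j, m j • x j
      map_add' := fun x y => by
        ext1 i
        simp only [Pi.add_apply, smul_add, Finset.sum_add_distrib]; abel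
      map_smul' := fun c x => by
        ext1 i
        simp only [Pi.smul_apply, RingHom.id_apply, smul_sub, smul_comm _ c, ← Finset.smul_sum] }

lemma center_apply (x : Conf d N) (i : Fin N) :
    center m x i = x i - (∑ j, m j)⁻¹ • ∑ j, m j • x j := rfl

lemma center_sub_center (x : Conf d N) (i j : Fin N) :
    center m x i - center m x j = x i - x j := by
  rw [center_apply, center_apply]; abel

lemma inX_center (hM : 0 < ∑ i, m i) (x : Conf d N) : inX m (center m x) := by
  simp only [inX, center_apply, smul_sub, Finset.sum_sub_distrib, ← Finset.sum_smul]
  rw [smul_smul, mul_inv_cancel₀ hM.ne', one_smul, sub_self]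

lemma center_eq_self {x : Conf d N} (hx : inX m x) : center m x = x := by
  ext1 i
  rw [center_apply, hx, smul_zero, sub_zero]

lemma minner_center_right (x y : Conf d N) :
    minner m x (center m y) = minner m (center m x) y := by
  have h : ∀ u v : Conf d N, minner m u (center m v)
      = minner m u v - (∑ j, m j)⁻¹ * ⟪∑ j, m j • u j, ∑ j, m j • v j⟫ := fun u v => by
    simp only [minner, center_apply, inner_sub_right, mul_sub, Finset.sum_sub_distrib,
      real_inner_smul_right]
    rw [sum_inner, Finset.mul_sum]
    congr 1
    refine Finset.sum_congr rfl fun i _ => ?_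
    rw [real_inner_smul_left]; ring
  rw [minner_comm (center m x) y, h, h, minner_comm y x, real_inner_comm]

lemma potDeriv_center (q v : Conf d N) : potDeriv m q (center m v) = potDeriv m q v := by
  simp only [potDeriv, center_sub_center]

end Center

section EulerLagrange

variable {m : Fin N → ℝ} {a x : Conf d N} {f g : ℝ → Conf d N}

lemma potDeriv_smul (c : ℝ) (q v : Conf d N) : potDeriv m q (c • v) = c * potDeriv m q v := by
  rw [potDeriv, potDeriv, ← pairSum_const_mul]
  congr 1; ext i j
  simp only [kernelDeriv, Pi.smul_apply, ← smul_sub, real_inner_smul_right]; ring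

lemma potHess_smul_left (c : ℝ) (q v z : Conf d N) :
    potHess m q (c • v) z = c * potHess m q v z := by
  rw [potHess, potHess, ← pairSum_const_mul]
  congr 1; ext i j
  simp only [kernelHess, Pi.smul_apply, ← smul_sub, real_inner_smul_right, real_inner_smul_left]
  ring

lemma energy_add_smul (hm : ∀ i, 0 < m i) (hf : MemLp f 2 halfLine) (hg : MemLp g 2 halfLine)
    (s : ℝ) : energy m (f + s • g) = energy m f
      + 2 * s * (∫ t in Set.Ioi (1:ℝ), minner m (f t) (g t)) + s ^ 2 * energy m g := by
  have h := energy_sub hm hf (hg.const_smul (-s))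
  have e : f - (-s) • g = f + s • g := by rw [neg_smul, sub_neg_eq_add]
  have e2 : ∫ t in Set.Ioi (1:ℝ), minner m (f t) (((-s) • g) t)
      = -s * ∫ t in Set.Ioi (1:ℝ), minner m (f t) (g t) := by
    rw [← integral_const_mul]
    simp only [Pi.smul_apply, minner_smul_right]
  rw [e, e2, energy_smul] at h
  rw [h]; ring

lemma motion_add (hf : MemLp f 2 halfLine) (hg : MemLp g 2 halfLine) (t : ℝ) :
    motion a x (f + g) t = motion a x f t + prim g t := by
  rw [motion_eq, motion_eq, prim_add hf hg]; abel

lemma eq_zero_of_forall_small {D R ε : ℝ} (hε : 0 < ε)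
    (h : ∀ s, |s| ≤ ε → 0 ≤ s * D + s ^ 2 * R) : D = 0 := by
  set δ := min (ε / (|D| + 1)) (1 / (2 * (|R| + 1)))
  have hδ : 0 < δ := lt_min (by positivity) (by positivity)
  have h1 : δ * |D| ≤ ε := by
    calc δ * |D| ≤ ε / (|D| + 1) * (|D| + 1) := by
          gcongr
          · exact min_le_left _ _
          · linarith
      _ = ε := div_mul_cancel₀ _ (by positivity)
  have h2 : δ * R ≤ 1 / 2 := by
    calc δ * R ≤ δ * (|R| + 1) :=
          mul_le_mul_of_nonneg_left (by linarith [le_abs_self R]) hδ.le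
      _ ≤ 1 / (2 * (|R| + 1)) * (|R| + 1) :=
          mul_le_mul_of_nonneg_right (min_le_right _ _) (by positivity)
      _ = 1 / 2 := by field_simp
  have h3 := h (-(δ * D)) (by rw [abs_neg, abs_mul, abs_of_pos hδ]; exact h1)
  have h4 : 0 ≤ δ * (D ^ 2 * (δ * R - 1)) := by nlinarith
  have h5 : 0 ≤ D ^ 2 * (δ * R - 1) := nonneg_of_mul_nonneg_right h4 hδ
  have h6 : D ^ 2 ≤ 0 := by nlinarith [sq_nonneg D]
  exact pow_eq_zero_iff (two_ne_zero) |>.1 (le_antisymm h6 (sq_nonneg D))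

lemma integrable_potDeriv (hm : ∀ i, 0 < m i) (hf : MemLp f 2 halfLine) (hg : MemLp g 2 halfLine)
    {c : ℝ} (hc : 0 < c) (hsep : ∀ t, 1 ≤ t → Separated (c * t) (motion a x f t)) :
    Integrable (fun t => potDeriv m (motion a x f t) (prim g t)) halfLine := by
  have hw := pairWeight_nonneg hm
  refine (integrable_decay.const_mul
    (pairWeight m * (2 * √(massConst m * energy m g) / c ^ 2))).mono' ?_ ?_
  · exact (measurable_potDeriv.comp_aemeasurable ((aemeasurable_motion hf).prodMk
      (aestronglyMeasurable_prim hg).aemeasurable)).aestronglyMeasurable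
  · filter_upwards [ae_restrict_mem measurableSet_Ioi] with t ht
    have ht1 : (1:ℝ) ≤ t := le_of_lt ht
    have ht0 : 0 < t := one_pos.trans_le ht1
    refine (abs_potDeriv_le hm (mul_pos hc ht0) (hsep t ht1) _).trans ?_
    calc _ ≤ pairWeight m * (2 * (√(massConst m * energy m g) * √t) / (c * t) ^ 2) := by
          gcongr; exact norm_prim_le hm hg ht1
      _ = _ := by rw [decay]; field_simp

/-- The first variation vanishes at minimizers in the directions of `D₀^{1,2}(1,+∞)`. -/
lemma first_variation_eq_zero (hm : ∀ i, 0 < m i) (ha : ¬ collision a) (hf : Minimizing m a x f)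
    (hcol : ∀ t, 1 ≤ t → ¬ collision (motion a x f t)) (hg : Admissible m g) :
    (∫ t in Set.Ioi (1:ℝ), minner m (f t) (g t))
      + ∫ t in Set.Ioi (1:ℝ), potDeriv m (motion a x f t) (prim g t) = 0 := by
  obtain ⟨c, hc, hsep⟩ := exists_separated_motion hm ha hf.1.1 hcol
  obtain ⟨hint, hinf⟩ := hf.hypInf_eq hm ha hcol
  have hder := integrable_potDeriv hm hf.1.1 hg.1 hc hsep
  have hw := pairWeight_nonneg hm
  set B := √(massConst m * energy m g)
  have hB : 0 ≤ B := Real.sqrt_nonneg _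
  set R := pairWeight m * (12 * B ^ 2 / c ^ 3)
  refine eq_zero_of_forall_small (ε := c / (4 * (B + 1)))
    (R := 1 / 2 * energy m g + R * ∫ t in Set.Ioi (1:ℝ), decay t) (by positivity) fun s hs => ?_
  have hsB : |s| * B ≤ c / 4 := by
    rw [le_div_iff₀ (by positivity)] at hs
    nlinarith [abs_nonneg s]
  have hsg : MemLp (s • g) 2 halfLine := hg.1.const_smul s
  have hadm : Admissible m (f + s • g) := by
    refine ⟨hf.1.1.add hsg, fun t ht => ?_⟩
    have h1 := hf.1.2 t ht
    have h2 := hg.2 t ht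
    rw [prim_add hf.1.1 hsg, prim_smul]
    simp only [inX, Pi.add_apply, Pi.smul_apply, smul_add, Finset.sum_add_distrib,
      smul_comm _ s, ← Finset.smul_sum] at h1 h2 ⊢
    rw [h1, h2, smul_zero, add_zero]
  have hmot : ∀ t, motion a x (f + s • g) t = motion a x f t + s • prim g t := fun t => by
    rw [motion_add hf.1.1 hsg, prim_smul]
  have hsmall : ∀ t, 1 ≤ t → ‖s • prim g t‖ ≤ c * t / 4 := fun t ht => by
    rw [norm_smul, Real.norm_eq_abs]
    calc |s| * ‖prim g t‖ ≤ |s| * (B * t) := by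
          gcongr
          exact (norm_prim_le hm hg.1 ht).trans (by gcongr; exact sqrt_le_self_of_one_le ht)
      _ = |s| * B * t := by ring
      _ ≤ c / 4 * t := by gcongr
      _ = _ := by ring
  have hsep' : ∀ t, 1 ≤ t → Separated (c / 2 * t) (motion a x (f + s • g) t) := fun t ht => by
    rw [hmot, div_mul_eq_mul_div]
    exact (hsep t ht).add (hsmall t ht)
  have hint' := integrable_renPot hm ha hadm.1 (half_pos hc) hsep'
  have hle := hypInf_le (a := a) (x := x) hm hadm
  rw [hinf, hypAction_eq_coe hm hadm.1 hint' (by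
    filter_upwards [ae_restrict_mem measurableSet_Ioi] with t ht
    have ht1 : (1:ℝ) ≤ t := le_of_lt ht
    exact not_collision_of_separated (by positivity) (hsep' t ht1)), EReal.coe_le_coe_iff,
    energy_add_smul hm hf.1.1 hg.1] at hle
  have hpot : (∫ t in Set.Ioi (1:ℝ), renPot m a x (f + s • g) t)
      ≤ ∫ t in Set.Ioi (1:ℝ), (renPot m a x f t
        + s * potDeriv m (motion a x f t) (prim g t) + s ^ 2 * R * decay t) := by
    refine integral_mono_ae hint' ((hint.add (hder.const_mul s)).add
      (integrable_decay.const_mul _)) ?_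
    filter_upwards [ae_restrict_mem measurableSet_Ioi] with t ht
    have ht1 : (1:ℝ) ≤ t := le_of_lt ht
    have ht0 : 0 < t := one_pos.trans_le ht1
    have h1 := abs_U_taylor_le hm (mul_pos hc ht0) (hsep t ht1) (hsmall t ht1)
    have h2 : pairWeight m * (12 * ‖s • prim g t‖ ^ 2 / (c * t) ^ 3) ≤ s ^ 2 * R * decay t := by
      rw [norm_smul, mul_pow, Real.norm_eq_abs, sq_abs]
      calc _ ≤ pairWeight m * (12 * (s ^ 2 * (B * √t) ^ 2) / (c * t) ^ 3) := by
            gcongr; exact norm_prim_le hm hg.1 ht1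
        _ = s ^ 2 * R * (√t ^ 2 / t ^ 3) := by simp only [R]; field_simp
        _ ≤ _ := by gcongr; exact sqrt_sq_div_cube_le_decay ht1
    have h3 := (abs_le.1 (h1.trans h2)).2
    rw [potDeriv_smul] at h3
    simp only [renPot, hmot]
    linarith
  have hsum : Integrable (fun t => renPot m a x f t
      + s * potDeriv m (motion a x f t) (prim g t)) halfLine := hint.add (hder.const_mul s)
  rw [integral_add hsum (integrable_decay.const_mul _), integral_add hint (hder.const_mul s),
    integral_const_mul, integral_const_mul] at hpot
  nlinarith

lemma MemLp.center (hf : MemLp f 2 halfLine) : MemLp (fun t => center m (f t)) 2 halfLine :=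
  (NBodyHJ.center m).comp_memLp' hf

/-- The weak Euler–Lagrange equation of minimizers, tested against all square integrable
velocities. -/
lemma euler_lagrange (hm : ∀ i, 0 < m i) (hM : 0 < ∑ i, m i) (ha : ¬ collision a)
    (hf : Minimizing m a x f) (hcol : ∀ t, 1 ≤ t → ¬ collision (motion a x f t))
    (hg : MemLp g 2 halfLine) :
    (∫ t in Set.Ioi (1:ℝ), minner m (center m (f t)) (g t))
      + ∫ t in Set.Ioi (1:ℝ), potDeriv m (motion a x f t) (prim g t) = 0 := by
  have h := first_variation_eq_zero hm ha hf hcol (g := fun t => center m (g t))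
    ⟨MemLp.center hg, fun t _ => by rw [prim_clm _ hg]; exact inX_center hM _⟩
  simpa only [minner_center_right, prim_clm _ hg, potDeriv_center] using h

end EulerLagrange

section Compactness

variable {m : Fin N → ℝ} {a x : Conf d N} {f g : ℝ → Conf d N}

lemma neg_le_renPot (hm : ∀ i, 0 < m i) {r : ℝ} (hr : 0 < r) (hra : Separated r a)
    (hf : MemLp f 2 halfLine) {C : ℝ} (hC : energy m f ≤ C) {t : ℝ} (ht : 1 ≤ t) :
    -(pairWeight m * (2 * devConst m a x C / r ^ 2) * decay t) ≤ renPot m a x f t := by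
  have ht0 : 0 < t := one_pos.trans_le ht
  have hw := pairWeight_nonneg hm
  have h := neg_le_U_add_sub hm (mul_pos hr ht0) (hra.smul ht0.le) (prim f t + (x - a))
  rw [← motion_eq] at h
  refine le_trans (neg_le_neg ?_) h
  have hdev : devConst m a x (energy m f) ≤ devConst m a x C := by
    have := massConst_nonneg hm
    rw [devConst, devConst]; gcongr
  calc _ ≤ pairWeight m * (2 * (devConst m a x C * √t) / (r * t) ^ 2) := by
        gcongr; exact (norm_prim_add_le hm hf ht).trans (by gcongr)
    _ = _ := by rw [decay]; field_simp

/-- Coercivity of the renormalized action. -/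
lemma exists_energy_bound (hm : ∀ i, 0 < m i) (ha : ¬ collision a) (x : Conf d N) (A : ℝ) :
    ∃ C, ∀ f : ℝ → Conf d N, MemLp f 2 halfLine → Integrable (renPot m a x f) halfLine →
      1 / 2 * energy m f + (∫ t in Set.Ioi (1:ℝ), renPot m a x f t) ≤ A → energy m f ≤ C := by
  obtain ⟨r, hr, hra⟩ := exists_separated ha
  set I := ∫ t in Set.Ioi (1:ℝ), decay t
  set c := pairWeight m * (2 / r ^ 2) * I
  refine ⟨4 * (A + c * ‖x - a‖ + c ^ 2 * massConst m), fun f hf hint hle => ?_⟩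
  have h1 : ∫ t in Set.Ioi (1:ℝ),
      -(pairWeight m * (2 * devConst m a x (energy m f) / r ^ 2) * decay t)
      ≤ ∫ t in Set.Ioi (1:ℝ), renPot m a x f t := by
    refine integral_mono_ae (integrable_decay.const_mul _).neg hint ?_
    filter_upwards [ae_restrict_mem measurableSet_Ioi] with t ht
    exact neg_le_renPot hm hr hra hf le_rfl (le_of_lt ht)
  rw [integral_neg, integral_const_mul] at h1
  have h2 : pairWeight m * (2 * devConst m a x (energy m f) / r ^ 2) * I
      = c * √(massConst m) * √(energy m f) + c * ‖x - a‖ := by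
    rw [devConst, Real.sqrt_mul (massConst_nonneg hm)]; simp only [c]; ring
  change -(pairWeight m * (2 * devConst m a x (energy m f) / r ^ 2) * I) ≤ _ at h1
  rw [h2] at h1
  have h3 := Real.sq_sqrt (energy_nonneg hm f)
  have h4 := Real.sq_sqrt (massConst_nonneg hm)
  have h5 := sq_nonneg (1 / 2 * √(energy m f) - c * √(massConst m))
  have h6 : (c * √(massConst m)) ^ 2 = c ^ 2 * massConst m := by rw [mul_pow, h4]
  nlinarith

/-- Lower semicontinuity of the potential part of the action, together with the absence of
collisions at almost every time in the limit. -/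
lemma renPot_lowerSemicontinuous (hm : ∀ i, 0 < m i) {f : ℕ → ℝ → Conf d N}
    {g : ℝ → Conf d N} (hg : MemLp g 2 halfLine)
    (hcol : ∀ n t, 1 ≤ t → ¬ collision (motion a x (f n) t))
    (hint : ∀ n, Integrable (renPot m a x (f n)) halfLine) {K L : ℝ}
    (hK : ∀ n t, 1 ≤ t → -(K * decay t) ≤ renPot m a x (f n) t)
    (hprim : ∀ t, Tendsto (fun n => prim (f n) t) atTop (𝓝 (prim g t)))
    (hL : Tendsto (fun n => ∫ t in Set.Ioi (1:ℝ), renPot m a x (f n) t) atTop (𝓝 L)) :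
    (∀ᵐ t ∂halfLine, ¬ collision (motion a x g t)) ∧ Integrable (renPot m a x g) halfLine ∧
      (∫ t in Set.Ioi (1:ℝ), renPot m a x g t) ≤ L := by
  have hmot : ∀ t, Tendsto (fun n => motion a x (f n) t) atTop (𝓝 (motion a x g t)) := fun t => by
    simp only [motion_eq]
    exact tendsto_const_nhds.add ((hprim t).add tendsto_const_nhds)
  have hKint : Integrable (fun t => K * decay t) halfLine := integrable_decay.const_mul K
  set I := ∫ t in Set.Ioi (1:ℝ), K * decay t
  have hGint : ∀ n, Integrable (fun t => renPot m a x (f n) t + K * decay t) halfLine :=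
    fun n => (hint n).add hKint
  have hG0 : ∀ n, 0 ≤ᵐ[halfLine] fun t => renPot m a x (f n) t + K * decay t := fun n => by
    filter_upwards [ae_restrict_mem measurableSet_Ioi] with t ht
    have := hK n t (le_of_lt ht)
    simp only [Pi.zero_apply]; linarith
  have hlim : Tendsto (fun n => ∫⁻ t, ENNReal.ofReal (renPot m a x (f n) t + K * decay t) ∂halfLine)
      atTop (𝓝 (ENNReal.ofReal (L + I))) := by
    have h1 : ∀ n, ∫⁻ t, ENNReal.ofReal (renPot m a x (f n) t + K * decay t) ∂halfLine
        = ENNReal.ofReal ((∫ t in Set.Ioi (1:ℝ), renPot m a x (f n) t) + I) := fun n => by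
      rw [← ofReal_integral_eq_lintegral_ofReal (hGint n) (hG0 n), integral_add (hint n) hKint]
    simp only [h1]
    exact ENNReal.tendsto_ofReal (hL.add tendsto_const_nhds)
  have hmeas : ∀ n, AEMeasurable
      (fun t => ENNReal.ofReal (renPot m a x (f n) t + K * decay t)) halfLine :=
    fun n => (hGint n).1.aemeasurable.ennreal_ofReal
  have hfatou := lintegral_liminf_le' (u := atTop) hmeas
  rw [hlim.liminf_eq] at hfatou
  have hliminf : AEMeasurable (fun t => liminf
      (fun n => ENNReal.ofReal (renPot m a x (f n) t + K * decay t)) atTop) halfLine := by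
    simp only [liminf_eq_iSup_iInf_of_nat']
    exact AEMeasurable.iSup fun n => AEMeasurable.iInf fun i => hmeas _
  have hfin := ae_lt_top' hliminf
    (hfatou.trans_lt ENNReal.ofReal_lt_top).ne
  have hnc : ∀ᵐ t ∂halfLine, ¬ collision (motion a x g t) := by
    filter_upwards [hfin, ae_restrict_mem measurableSet_Ioi] with t ht ht1 hc
    have h1 := tendsto_U_atTop_of_collision (m := m) hm hc (hmot t)
      fun n => hcol n t (le_of_lt ht1)
    have h2 : Tendsto (fun n => renPot m a x (f n) t + K * decay t) atTop atTop := by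
      simp only [renPot, sub_add]
      exact tendsto_atTop_add_const_right _ _ h1
    exact ht.ne (ENNReal.tendsto_ofReal_atTop.comp h2).liminf_eq
  have hpt : ∀ᵐ t ∂halfLine, Tendsto (fun n => renPot m a x (f n) t + K * decay t) atTop
      (𝓝 (renPot m a x g t + K * decay t)) := by
    filter_upwards [hnc] with t ht
    exact ((tendsto_U_of_not_collision ht (hmot t)).sub tendsto_const_nhds).add
      tendsto_const_nhds
  have hpos : 0 ≤ᵐ[halfLine] fun t => renPot m a x g t + K * decay t := by
    filter_upwards [hpt, ae_all_iff.2 hG0] with t ht h0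
    exact ge_of_tendsto' ht h0
  have hle : ∫⁻ t, ENNReal.ofReal (renPot m a x g t + K * decay t) ∂halfLine
      ≤ ENNReal.ofReal (L + I) := by
    refine le_trans (le_of_eq (lintegral_congr_ae ?_)) hfatou
    filter_upwards [hpt] with t ht
    exact (ENNReal.tendsto_ofReal ht).liminf_eq.symm
  have hsm : AEStronglyMeasurable (fun t => renPot m a x g t + K * decay t) halfLine :=
    (aestronglyMeasurable_renPot hg).add hKint.1
  have hGi : Integrable (fun t => renPot m a x g t + K * decay t) halfLine :=
    (lintegral_ofReal_ne_top_iff_integrable hsm hpos).1 (hle.trans_lt ENNReal.ofReal_lt_top).ne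
  have hgi : Integrable (renPot m a x g) halfLine := by
    refine (hGi.sub hKint).congr (Eventually.of_forall fun t => ?_)
    simp
  refine ⟨hnc, hgi, ?_⟩
  have hLI : 0 ≤ L + I := by
    refine ge_of_tendsto' (hL.add_const I) fun n => ?_
    rw [← integral_add (hint n) hKint]
    exact integral_nonneg_of_ae (hG0 n)
  rw [← ofReal_integral_eq_lintegral_ofReal hGi hpos, ENNReal.ofReal_le_ofReal_iff hLI,
    integral_add hgi hKint] at hle
  linarith

lemma inX_of_tendsto {q : ℕ → Conf d N} {p : Conf d N} (hq : ∀ n, inX m (q n))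
    (h : Tendsto q atTop (𝓝 p)) : inX m p := by
  have h1 : Tendsto (fun n => ∑ i, m i • q n i) atTop (𝓝 (∑ i, m i • p i)) :=
    tendsto_finsetSum _ fun i _ => (tendsto_pi_nhds.1 h i).const_smul (m i)
  exact tendsto_nhds_unique h1 (tendsto_const_nhds.congr fun n => (hq n).symm)

/-- Sequences of collision-free minimizers are precompact in the energy norm. -/
lemma exists_strong_limit (hm : ∀ i, 0 < m i) (ha : ¬ collision a) {f : ℕ → ℝ → Conf d N}
    (hf : ∀ n, Minimizing m a x (f n))
    (hcol : ∀ n t, 1 ≤ t → ¬ collision (motion a x (f n) t)) :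
    ∃ (g : ℝ → Conf d N) (σ : ℕ → ℕ), StrictMono σ ∧ Minimizing m a x g ∧
      Tendsto (fun n => energy m (f (σ n) - g)) atTop (𝓝 0) := by
  obtain ⟨r, hr, hra⟩ := exists_separated ha
  set A := 1 / 2 * energy m (f 0) + ∫ t in Set.Ioi (1:ℝ), renPot m a x (f 0) t
  have hA : hypInf m a x ⊤ = (A : EReal) := ((hf 0).hypInf_eq hm ha (hcol 0)).2
  have hint : ∀ n, Integrable (renPot m a x (f n)) halfLine :=
    fun n => ((hf n).hypInf_eq hm ha (hcol n)).1
  have hval : ∀ n, 1 / 2 * energy m (f n) + (∫ t in Set.Ioi (1:ℝ), renPot m a x (f n) t) = A :=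
    fun n => by
      have := ((hf n).hypInf_eq hm ha (hcol n)).2
      rw [hA, EReal.coe_eq_coe_iff] at this
      exact this.symm
  obtain ⟨C, hC⟩ := exists_energy_bound hm ha x A
  have hE : ∀ n, energy m (f n) ≤ C := fun n => hC _ (hf n).1.1 (hint n) (hval n).le
  obtain ⟨g, σ, hg, hσ, hweak⟩ := exists_weak_limit hm f (fun n => (hf n).1.1) hE
  obtain ⟨e, -, τ, hτ, he⟩ := tendsto_subseq_of_bounded
    (Metric.isBounded_Icc (0:ℝ) C) (x := fun n => energy m (f (σ n)))
    (fun n => ⟨energy_nonneg hm _, hE _⟩)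
  set ρ := σ ∘ τ
  have hρ : StrictMono ρ := hσ.comp hτ
  have he' : Tendsto (fun n => energy m (f (ρ n))) atTop (𝓝 e) := he
  have hweak' : ∀ h : ℝ → Conf d N, MemLp h 2 halfLine →
      Tendsto (fun n => ∫ t in Set.Ioi (1:ℝ), minner m (f (ρ n) t) (h t)) atTop
        (𝓝 (∫ t in Set.Ioi (1:ℝ), minner m (g t) (h t))) :=
    fun h hh => (hweak h hh).comp hτ.tendsto_atTop
  have hprim := tendsto_prim_of_weak hm (fun n => (hf (ρ n)).1.1) hg hweak'
  have hadm : Admissible m g :=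
    ⟨hg, fun t ht => inX_of_tendsto (fun n => (hf (ρ n)).1.2 t ht) (hprim t)⟩
  have hL : Tendsto (fun n => ∫ t in Set.Ioi (1:ℝ), renPot m a x (f (ρ n)) t) atTop
      (𝓝 (A - 1 / 2 * e)) := by
    refine (tendsto_const_nhds.sub (he'.const_mul (1 / 2))).congr fun n => ?_
    linarith [hval (ρ n)]
  obtain ⟨hnc, hgi, hle⟩ := renPot_lowerSemicontinuous hm hg
    (fun n => hcol (ρ n)) (fun n => hint (ρ n))
    (fun n t ht => neg_le_renPot hm hr hra (hf (ρ n)).1.1 (hE (ρ n)) ht) hprim hL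
  have hstrong : Tendsto (fun n => energy m (f (ρ n) - g)) atTop (𝓝 (e - energy m g)) := by
    have h1 : ∀ n, energy m (f (ρ n) - g) = energy m (f (ρ n))
        - 2 * (∫ t in Set.Ioi (1:ℝ), minner m (f (ρ n) t) (g t)) + energy m g :=
      fun n => energy_sub hm (hf (ρ n)).1.1 hg
    simp only [h1]
    have h2 := (he'.sub ((hweak' g hg).const_mul 2)).add_const (energy m g)
    convert h2 using 2
    rw [← energy]; ring
  have hge : 0 ≤ e - energy m g := ge_of_tendsto' hstrong fun n => energy_nonneg hm _
  have hact := hypAction_eq_coe hm hg hgi hnc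
  have hinf := hypInf_le (a := a) (x := x) hm hadm
  have hinf' := hinf
  rw [hact, hA, EReal.coe_le_coe_iff] at hinf'
  have heq : e - energy m g = 0 := by linarith
  refine ⟨g, ρ, hρ, ⟨hadm, ?_⟩, heq ▸ hstrong⟩
  rw [hact, hA, EReal.coe_eq_coe_iff]
  linarith

end Compactness

section HessForm

variable {m : Fin N → ℝ} {γ : ℝ → Conf d N} {f g u : ℝ → Conf d N} {c : ℝ}

/-- The second variation along `γ`, with the Hessian of the potential written out. -/
def hessForm (m : Fin N → ℝ) (γ u g : ℝ → Conf d N) : ℝ :=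
  (∫ t in Set.Ioi (1:ℝ), minner m (u t) (g t))
    + ∫ t in Set.Ioi (1:ℝ), potHess m (γ t) (prim u t) (prim g t)

lemma abs_potHess_prim_le (hm : ∀ i, 0 < m i) (hc : 0 < c)
    (hsep : ∀ t, 1 ≤ t → Separated (c * t) (γ t)) (hu : MemLp u 2 halfLine)
    (hg : MemLp g 2 halfLine) {A B : ℝ} (hA : energy m u ≤ A) (hB : energy m g ≤ B) {t : ℝ}
    (ht : 1 ≤ t) :
    |potHess m (γ t) (prim u t) (prim g t)|
      ≤ pairWeight m * (16 * (√(massConst m * A) * √(massConst m * B)) / c ^ 3) * decay t := by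
  have ht0 : 0 < t := one_pos.trans_le ht
  have hw := pairWeight_nonneg hm
  have hκ := massConst_nonneg hm
  refine (abs_potHess_le hm (mul_pos hc ht0) (hsep t ht) _ _).trans ?_
  calc _ ≤ pairWeight m * (16 * ((√(massConst m * A) * √t) * (√(massConst m * B) * √t))
          / (c * t) ^ 3) := by
        gcongr
        · exact (norm_prim_le hm hu ht).trans (by gcongr)
        · exact (norm_prim_le hm hg ht).trans (by gcongr)
    _ = pairWeight m * (16 * (√(massConst m * A) * √(massConst m * B)) / c ^ 3)
          * (√t ^ 2 / t ^ 3) := by field_simp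
    _ ≤ _ := by gcongr; exact sqrt_sq_div_cube_le_decay ht

lemma aestronglyMeasurable_potHess_prim (hγ : AEMeasurable γ halfLine) (hu : MemLp u 2 halfLine)
    (hg : MemLp g 2 halfLine) :
    AEStronglyMeasurable (fun t => potHess m (γ t) (prim u t) (prim g t)) halfLine :=
  (measurable_potHess.comp_aemeasurable (hγ.prodMk
    ((aestronglyMeasurable_prim hu).aemeasurable.prodMk
      (aestronglyMeasurable_prim hg).aemeasurable))).aestronglyMeasurable

lemma integrable_potHess_prim (hm : ∀ i, 0 < m i) (hγ : AEMeasurable γ halfLine) (hc : 0 < c)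
    (hsep : ∀ t, 1 ≤ t → Separated (c * t) (γ t)) (hu : MemLp u 2 halfLine)
    (hg : MemLp g 2 halfLine) :
    Integrable (fun t => potHess m (γ t) (prim u t) (prim g t)) halfLine := by
  refine (integrable_decay.const_mul (pairWeight m * (16 * (√(massConst m * energy m u)
    * √(massConst m * energy m g)) / c ^ 3))).mono' (aestronglyMeasurable_potHess_prim hγ hu hg) ?_
  filter_upwards [ae_restrict_mem measurableSet_Ioi] with t ht
  exact abs_potHess_prim_le hm hc hsep hu hg le_rfl le_rfl (le_of_lt ht)

lemma continuous_potHess (q : Conf d N) :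
    Continuous fun p : Conf d N × Conf d N => potHess m q p.1 p.2 := by
  unfold potHess pairSum kernelHess
  refine continuous_finsetSum _ fun i _ => continuous_finsetSum _ fun j _ => ?_
  split_ifs
  · fun_prop
  · exact continuous_const

/-- The potential part of the second variation is weakly sequentially continuous. -/
lemma tendsto_integral_potHess_prim (hm : ∀ i, 0 < m i) (hγ : AEMeasurable γ halfLine)
    (hc : 0 < c) (hsep : ∀ t, 1 ≤ t → Separated (c * t) (γ t)) {u g : ℕ → ℝ → Conf d N}
    {v w : ℝ → Conf d N} (hu : ∀ n, MemLp (u n) 2 halfLine) (hg : ∀ n, MemLp (g n) 2 halfLine)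
    {A B : ℝ} (hA : ∀ n, energy m (u n) ≤ A) (hB : ∀ n, energy m (g n) ≤ B)
    (huv : ∀ t, Tendsto (fun n => prim (u n) t) atTop (𝓝 (prim v t)))
    (hgw : ∀ t, Tendsto (fun n => prim (g n) t) atTop (𝓝 (prim w t))) :
    Tendsto (fun n => ∫ t in Set.Ioi (1:ℝ), potHess m (γ t) (prim (u n) t) (prim (g n) t)) atTop
      (𝓝 (∫ t in Set.Ioi (1:ℝ), potHess m (γ t) (prim v t) (prim w t))) := by
  refine tendsto_integral_of_dominated_convergence (fun t => pairWeight m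
      * (16 * (√(massConst m * A) * √(massConst m * B)) / c ^ 3) * decay t)
    (fun n => aestronglyMeasurable_potHess_prim hγ (hu n) (hg n))
    (integrable_decay.const_mul _) (fun n => ?_) (Eventually.of_forall fun t => ?_)
  · filter_upwards [ae_restrict_mem measurableSet_Ioi] with t ht
    exact abs_potHess_prim_le hm hc hsep (hu n) (hg n) (hA n) (hB n) (le_of_lt ht)
  · have h1 := (continuous_potHess (m := m) (γ t)).tendsto (prim v t, prim w t)
    exact h1.comp (f := fun n => (prim (u n) t, prim (g n) t)) ((huv t).prodMk_nhds (hgw t))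

lemma secondVar_eq_hessForm (hm : ∀ i, 0 < m i) (hγ : AEMeasurable γ halfLine) (hc : 0 < c)
    (hsep : ∀ t, 1 ≤ t → Separated (c * t) (γ t)) (hu : MemLp u 2 halfLine)
    (hg : MemLp g 2 halfLine) : secondVar m γ u g = hessForm m γ u g := by
  rw [hessForm, ← integral_add (integrable_minner hm hu hg)
    (integrable_potHess_prim hm hγ hc hsep hu hg), secondVar]
  refine setIntegral_congr_fun measurableSet_Ioi fun t ht => ?_
  have ht1 : (1:ℝ) ≤ t := le_of_lt ht
  have hnc : ¬ collision (γ t) :=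
    not_collision_of_separated (mul_pos hc (one_pos.trans_le ht1)) (hsep t ht1)
  simp only [hessB_eq_potHess hnc]
  rfl

lemma hessForm_smul_left (k : ℝ) (γ u g : ℝ → Conf d N) :
    hessForm m γ (k • u) g = k * hessForm m γ u g := by
  simp only [hessForm, prim_smul, Pi.smul_apply, minner_smul_left, potHess_smul_left,
    integral_const_mul, mul_add]

/-- An invertible second variation has trivial kernel. -/
lemma FormInvertible.eq_zero (hm : ∀ i, 0 < m i) (hγ : AEMeasurable γ halfLine) (hc : 0 < c)
    (hsep : ∀ t, 1 ≤ t → Separated (c * t) (γ t)) (hinv : FormInvertible m γ) {F : Hsp d N}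
    (hF : ∀ g, MemLp g 2 halfLine → hessForm m γ F g = 0) : F = 0 := by
  obtain ⟨F₀, -, huniq⟩ := hinv 0
  have h1 : ∀ g : Hsp d N, secondVar m γ F g = (0 : Hsp d N →L[ℝ] ℝ) g := fun g => by
    rw [secondVar_eq_hessForm hm hγ hc hsep (Lp.memLp F) (Lp.memLp g), hF _ (Lp.memLp g)]
    rfl
  refine (huniq F h1).trans (huniq 0 fun g => ?_).symm
  have h0 : ((0 : Hsp d N) : ℝ → Conf d N) =ᵐ[halfLine] (0:ℝ) • (0 : ℝ → Conf d N) := by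
    rw [zero_smul]; exact Lp.coeFn_zero _ _ _
  have h2 : hessForm m γ (0 : Hsp d N) g = hessForm m γ ((0:ℝ) • (0 : ℝ → Conf d N)) g := by
    simp only [hessForm, prim_congr h0]
    congr 1
    refine integral_congr_ae ?_
    filter_upwards [h0] with t ht
    rw [ht]
  rw [secondVar_eq_hessForm hm hγ hc hsep (Lp.memLp _) (Lp.memLp g), h2, hessForm_smul_left,
    zero_mul]
  rfl

end HessForm

section Isolation

variable {m : Fin N → ℝ} {a x : Conf d N} {f g h : ℝ → Conf d N}

lemma minner_center_self_le (hm : ∀ i, 0 < m i) (hM : 0 < ∑ i, m i) (y : Conf d N) :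
    minner m (center m y) (center m y) ≤ minner m y y := by
  have h1 := minner_self_nonneg hm (y - center m y)
  have h2 := minner_center_right (m := m) (center m y) y
  rw [center_eq_self (inX_center hM y)] at h2
  rw [minner_sub_left, minner_comm y, minner_comm (center m y) (y - _), minner_sub_left,
    minner_sub_left, h2, minner_comm y (center m y)] at h1
  linarith

lemma energy_center_le (hm : ∀ i, 0 < m i) (hM : 0 < ∑ i, m i) (hf : MemLp f 2 halfLine) :
    energy m (fun t => center m (f t)) ≤ energy m f :=
  integral_mono (integrable_minner hm (MemLp.center hf) (MemLp.center hf))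
    (integrable_minner hm hf hf) fun t => minner_center_self_le hm hM (f t)

/-- The velocity of the difference of two curves, projected to the zero-barycenter space. -/
def velDiff (m : Fin N → ℝ) (h f : ℝ → Conf d N) : ℝ → Conf d N := fun t => center m ((h - f) t)

lemma memLp_velDiff (hh : MemLp h 2 halfLine) (hf : MemLp f 2 halfLine) :
    MemLp (velDiff m h f) 2 halfLine := MemLp.center (hh.sub hf)

lemma prim_velDiff (hh : Admissible m h) (hf : Admissible m f) {t : ℝ} (ht : 1 ≤ t) :
    prim (velDiff m h f) t = prim h t - prim f t := by
  change prim (fun s => center m ((h - f) s)) t = _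
  rw [prim_clm _ (hh.1.sub hf.1), prim_sub hh.1 hf.1, map_sub,
    center_eq_self (hh.2 t ht), center_eq_self (hf.2 t ht)]

/-- The second variation at a minimizer is quadratically small along the difference with a nearby
minimizer. -/
lemma exists_abs_hessForm_velDiff_le (hm : ∀ i, 0 < m i) (hM : 0 < ∑ i, m i)
    (ha : ¬ collision a) (hf : Minimizing m a x f)
    (hcol : ∀ t, 1 ≤ t → ¬ collision (motion a x f t)) :
    ∃ K, ∃ δ > 0, ∀ h, Minimizing m a x h → (∀ t, 1 ≤ t → ¬ collision (motion a x h t)) →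
      energy m (velDiff m h f) ≤ δ → ∀ g, MemLp g 2 halfLine →
        |hessForm m (motion a x f) (velDiff m h f) g|
          ≤ K * energy m (velDiff m h f) * √(energy m g) := by
  obtain ⟨c, hc, hsep⟩ := exists_separated_motion hm ha hf.1.1 hcol
  have hw := pairWeight_nonneg hm
  have hκ := massConst_nonneg hm
  refine ⟨pairWeight m * (328 * (massConst m * √(massConst m)) / c ^ 4)
    * ∫ t in Set.Ioi (1:ℝ), decay t, (c / 4) ^ 2 / (massConst m + 1), by positivity,
    fun h hh hcolh hδ g hg => ?_⟩
  obtain ⟨b, hb, hsepb⟩ := exists_separated_motion hm ha hh.1.1 hcolh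
  set u := velDiff m h f
  have hu : MemLp u 2 halfLine := memLp_velDiff hh.1.1 hf.1.1
  have hE := energy_nonneg hm u
  have hsmall : √(massConst m * energy m u) ≤ c / 4 := by
    refine Real.sqrt_le_iff.2 ⟨by positivity, ?_⟩
    rw [le_div_iff₀ (by positivity)] at hδ
    nlinarith
  have hmot : ∀ t, 1 ≤ t → motion a x h t = motion a x f t + prim u t := fun t ht => by
    rw [prim_velDiff hh.1 hf.1 ht, motion_eq, motion_eq]; abel
  have hel := euler_lagrange hm hM ha hf hcol hg
  have helh := euler_lagrange hm hM ha hh hcolh hg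
  have hdf := integrable_potDeriv hm hf.1.1 hg hc hsep
  have hdh := integrable_potDeriv hm hh.1.1 hg hb hsepb
  have hH := integrable_potHess_prim hm (aemeasurable_motion hf.1.1) hc hsep hu hg
  have hsub : ∫ t in Set.Ioi (1:ℝ), minner m (u t) (g t)
      = (∫ t in Set.Ioi (1:ℝ), minner m (center m (h t)) (g t))
        - ∫ t in Set.Ioi (1:ℝ), minner m (center m (f t)) (g t) := by
    rw [← integral_sub (integrable_minner hm (MemLp.center hh.1.1) hg)
      (integrable_minner hm (MemLp.center hf.1.1) hg)]
    refine integral_congr_ae (Eventually.of_forall fun t => ?_)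
    simp only [u, velDiff, Pi.sub_apply, map_sub, minner_sub_left]
  have hform : hessForm m (motion a x f) u g
      = -∫ t in Set.Ioi (1:ℝ), (potDeriv m (motion a x h t) (prim g t)
        - potDeriv m (motion a x f t) (prim g t)
        - potHess m (motion a x f t) (prim u t) (prim g t)) := by
    have hd : Integrable (fun t => potDeriv m (motion a x h t) (prim g t)
      - potDeriv m (motion a x f t) (prim g t)) halfLine := hdh.sub hdf
    rw [integral_sub hd hH, integral_sub hdh hdf, hessForm, hsub]
    linarith
  rw [hform, abs_neg, ← Real.norm_eq_abs]
  have hbound := norm_integral_le_of_norm_le (μ := halfLine)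
    (f := fun t => potDeriv m (motion a x h t) (prim g t)
        - potDeriv m (motion a x f t) (prim g t)
        - potHess m (motion a x f t) (prim u t) (prim g t))
    (integrable_decay.const_mul (pairWeight m
      * (328 * (√(massConst m * energy m u) ^ 2 * √(massConst m * energy m g)) / c ^ 4))) (by
    filter_upwards [ae_restrict_mem measurableSet_Ioi] with t ht
    have ht1 : (1:ℝ) ≤ t := le_of_lt ht
    have ht0 : 0 < t := one_pos.trans_le ht1
    have hpu := norm_prim_le hm hu ht1
    have hpt : ‖prim u t‖ ≤ c * t / 4 := by
      calc ‖prim u t‖ ≤ c / 4 * t := hpu.trans (by gcongr; exact sqrt_le_self_of_one_le ht1)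
        _ = _ := by ring
    rw [hmot t ht1, Real.norm_eq_abs]
    refine (abs_potDeriv_taylor_le hm (mul_pos hc ht0) (hsep t ht1) hpt _).trans ?_
    calc _ ≤ pairWeight m * (328 * ((√(massConst m * energy m u) * √t) ^ 2
            * (√(massConst m * energy m g) * √t)) / (c * t) ^ 4) := by
          gcongr
          exact norm_prim_le hm hg ht1
      _ = pairWeight m
            * (328 * (√(massConst m * energy m u) ^ 2 * √(massConst m * energy m g)) / c ^ 4)
            * (√t ^ 3 / t ^ 4) := by field_simp
      _ ≤ _ := by gcongr; exact sqrt_cube_div_le_decay ht1)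
  refine hbound.trans (le_of_eq ?_)
  rw [integral_const_mul, Real.sq_sqrt (by positivity), Real.sqrt_mul hκ (energy m g)]
  ring

/-- A nondegenerate minimizer is isolated in the energy norm. -/
lemma exists_prim_eq_of_tendsto (hm : ∀ i, 0 < m i) (hM : 0 < ∑ i, m i) (ha : ¬ collision a)
    (hf : Minimizing m a x f) (hcol : ∀ t, 1 ≤ t → ¬ collision (motion a x f t))
    (hinv : FormInvertible m (motion a x f)) {h : ℕ → ℝ → Conf d N}
    (hh : ∀ n, Minimizing m a x (h n))
    (hcolh : ∀ n t, 1 ≤ t → ¬ collision (motion a x (h n) t))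
    (hlim : Tendsto (fun n => energy m (h n - f)) atTop (𝓝 0)) :
    ∃ n, ∀ t, 1 ≤ t → prim (h n) t = prim f t := by
  by_contra! hne
  obtain ⟨c, hc, hsep⟩ := exists_separated_motion hm ha hf.1.1 hcol
  have hγ := aemeasurable_motion (a := a) (x := x) hf.1.1
  obtain ⟨K, δ, hδ, hK⟩ := exists_abs_hessForm_velDiff_le hm hM ha hf hcol
  set u : ℕ → ℝ → Conf d N := fun n => velDiff m (h n) f
  have hu : ∀ n, MemLp (u n) 2 halfLine := fun n => memLp_velDiff (hh n).1.1 hf.1.1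
  have hupos : ∀ n, 0 < energy m (u n) := fun n => by
    refine (energy_nonneg hm _).lt_of_ne' fun h0 => ?_
    obtain ⟨t, ht, htne⟩ := hne n
    have := energy_eq_zero hm (hu n) h0 t ht
    rw [prim_velDiff (hh n).1 hf.1 ht] at this
    exact htne (sub_eq_zero.1 this)
  have hulim : Tendsto (fun n => energy m (u n)) atTop (𝓝 0) :=
    squeeze_zero (fun n => (hupos n).le)
      (fun n => energy_center_le hm hM ((hh n).1.1.sub hf.1.1)) hlim
  set e : ℕ → ℝ := fun n => √(energy m (u n))
  have he : ∀ n, 0 < e n := fun n => Real.sqrt_pos.2 (hupos n)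
  have helim : Tendsto e atTop (𝓝 0) := by
    have := hulim.sqrt
    rwa [Real.sqrt_zero] at this
  set w : ℕ → ℝ → Conf d N := fun n => (e n)⁻¹ • u n
  have hw : ∀ n, MemLp (w n) 2 halfLine := fun n => (hu n).const_smul _
  have hwE : ∀ n, energy m (w n) = 1 := fun n => by
    rw [energy_smul, inv_pow, Real.sq_sqrt (hupos n).le, inv_mul_cancel₀ (hupos n).ne']
  have hbound : ∀ᶠ n in atTop, ∀ g, MemLp g 2 halfLine →
      |hessForm m (motion a x f) (w n) g| ≤ K * e n * √(energy m g) := by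
    filter_upwards [hulim.eventually (eventually_le_nhds hδ)] with n hn g hg
    have h1 := hK (h n) (hh n) (hcolh n) hn g hg
    have h2 : energy m (u n) = e n * e n := (Real.mul_self_sqrt (hupos n).le).symm
    rw [hessForm_smul_left, abs_mul, abs_of_pos (inv_pos.2 (he n)), inv_mul_le_iff₀ (he n)]
    refine h1.trans (le_of_eq ?_)
    change K * energy m (u n) * _ = _
    rw [h2]; ring
  have hzero : ∀ g : ℕ → ℝ → Conf d N, (∀ n, MemLp (g n) 2 halfLine) → ∀ B,
      (∀ n, energy m (g n) = B) →
      Tendsto (fun n => hessForm m (motion a x f) (w n) (g n)) atTop (𝓝 0) := fun g hg B hB => by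
    have h1 : Tendsto (fun n => K * e n * √B) atTop (𝓝 0) := by
      simpa using (helim.const_mul K).mul_const √B
    refine squeeze_zero_norm' ?_ h1
    filter_upwards [hbound] with n hn
    have := hn (g n) (hg n)
    rwa [hB n] at this
  obtain ⟨v, σ, hv, hσ, hweak⟩ := exists_weak_limit hm w hw (fun n => (hwE n).le)
  set F : Hsp d N := hv.toLp v
  have hF : (F : ℝ → Conf d N) =ᵐ[halfLine] v := hv.coeFn_toLp
  have hweakF : ∀ g : ℝ → Conf d N, MemLp g 2 halfLine →
      Tendsto (fun n => ∫ t in Set.Ioi (1:ℝ), minner m (w (σ n) t) (g t)) atTop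
        (𝓝 (∫ t in Set.Ioi (1:ℝ), minner m (F t) (g t))) := fun g hg => by
    have h1 : ∫ t in Set.Ioi (1:ℝ), minner m (F t) (g t)
        = ∫ t in Set.Ioi (1:ℝ), minner m (v t) (g t) := by
      refine integral_congr_ae ?_
      filter_upwards [hF] with t ht
      rw [ht]
    rw [h1]
    exact hweak g hg
  have hprim := tendsto_prim_of_weak hm (fun n => hw (σ n)) (Lp.memLp F) hweakF
  have hker : ∀ g, MemLp g 2 halfLine → hessForm m (motion a x f) F g = 0 := fun g hg => by
    have h1 := (hzero (fun _ => g) (fun _ => hg) _ fun _ => rfl).comp hσ.tendsto_atTop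
    have h2 := tendsto_integral_potHess_prim hm hγ hc hsep (fun n => hw (σ n)) (fun _ => hg)
      (fun n => (hwE (σ n)).le) (fun _ => le_rfl) hprim (fun _ => tendsto_const_nhds)
    exact tendsto_nhds_unique ((hweakF g hg).add h2) h1
  have hF0 : F = 0 := hinv.eq_zero hm hγ hc hsep hker
  have hprim0 : ∀ t, prim F t = (0:ℝ) • prim F t := fun t => by
    have h0 : (F : ℝ → Conf d N) =ᵐ[halfLine] (0:ℝ) • (F : ℝ → Conf d N) := by
      rw [hF0, zero_smul]; exact Lp.coeFn_zero _ _ _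
    rw [← prim_smul]
    exact prim_congr h0 t
  have h1 := (hzero w hw 1 hwE).comp hσ.tendsto_atTop
  have h2 := tendsto_integral_potHess_prim hm hγ hc hsep (fun n => hw (σ n))
    (fun n => hw (σ n)) (fun n => (hwE (σ n)).le) (fun n => (hwE (σ n)).le) hprim hprim
  have h3 : ∫ t in Set.Ioi (1:ℝ), potHess m (motion a x f t) (prim F t) (prim F t) = 0 := by
    refine integral_eq_zero_of_ae (Eventually.of_forall fun t => ?_)
    change potHess m _ (prim F t) (prim F t) = 0
    rw [hprim0, potHess_smul_left, zero_mul]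
  rw [h3] at h2
  have h4 : Tendsto (fun n => hessForm m (motion a x f) (w (σ n)) (w (σ n))) atTop
      (𝓝 (1 + 0)) := by
    refine (h2.const_add 1).congr fun n => ?_
    rw [hessForm, ← energy, hwE]
  have := tendsto_nhds_unique h4 h1
  norm_num at this

end Isolation

/-- **Finiteness of the set of minimizers at non-conjugate points** : if `x ∈ Ω`, `A_x`
admits a minimizer, and for every minimizer `φ` the motion `γ = a t + φ + x − a` stays in
`Ω` and `d²A_x(φ)` is invertible, then the set of minimizers of `A_x` (as functions on
`[1,∞)`) is finite. -/
theorem minimizers_finite_at_nonconjugate {d N : ℕ} (hd : 2 ≤ d) (hN : 2 ≤ N)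
    (m : Fin N → ℝ) (hm : ∀ i, 0 < m i)
    (a : Conf d N) (ha : inOmega m a)
    (x : Conf d N) (hx : inOmega m x)
    (hexists : ∃ φ φ' : ℝ → Conf d N,
      InD m 1 ⊤ φ φ' ∧ hypAction m a x ⊤ φ φ' = hypInf m a x ⊤)
    (hnonconj : ∀ φ φ' : ℝ → Conf d N, InD m 1 ⊤ φ φ' →
      hypAction m a x ⊤ φ φ' = hypInf m a x ⊤ →
        (∀ t : ℝ, 1 ≤ t → inOmega m (hypCurve a x φ t)) ∧
        FormInvertible m (hypCurve a x φ)) :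
    Set.Finite
      ((fun p : (ℝ → Conf d N) × (ℝ → Conf d N) => (Set.Ici (1:ℝ)).restrict p.1) ''
        {p | InD m 1 ⊤ p.1 p.2 ∧ hypAction m a x ⊤ p.1 p.2 = hypInf m a x ⊤}) := by
  have hM : 0 < ∑ i, m i :=
    Finset.sum_pos (fun i _ => hm i) ⟨⟨0, by omega⟩, Finset.mem_univ _⟩
  have hgood : ∀ f : ℝ → Conf d N, Minimizing m a x f →
      (∀ t, 1 ≤ t → ¬ collision (motion a x f t)) ∧ FormInvertible m (motion a x f) := fun f hf =>
    have h := hnonconj (prim f) f (hf.1.inD hm) hf.2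
    ⟨fun t ht => (h.1 t ht).2, h.2⟩
  by_contra hinf
  have hinfinite := Set.not_finite.1 hinf
  set ι := hinfinite.natEmbedding
  choose p hp hpι using fun n => (ι n).2
  set f : ℕ → ℝ → Conf d N := fun n => (p n).2
  have hf : ∀ n, Minimizing m a x (f n) := fun n =>
    ⟨(hp n).1.admissible hm, (hp n).1.hypAction_eq.symm.trans (hp n).2⟩
  have hinj : ∀ k n, (∀ t, 1 ≤ t → prim (f k) t = prim (f n) t) → k = n := fun k n h => by
    refine ι.injective (Subtype.ext ?_)
    rw [← hpι k, ← hpι n]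
    ext1 t
    change (p k).1 t = (p n).1 t
    rw [(hp k).1.eq_prim t.2, (hp n).1.eq_prim t.2]
    exact h t t.2
  obtain ⟨g, σ, hσ, hg, hlim⟩ := exists_strong_limit hm ha.2 hf fun n => (hgood _ (hf n)).1
  obtain ⟨hgcol, hginv⟩ := hgood g hg
  have hex : ∀ k, ∃ n, ∀ t, 1 ≤ t → prim (f (σ (n + k))) t = prim g t := fun k =>
    exists_prim_eq_of_tendsto hm hM ha.2 hg hgcol hginv (fun n => hf (σ (n + k)))
      (fun n => (hgood _ (hf (σ (n + k)))).1) (hlim.comp (tendsto_add_atTop_nat k))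
  obtain ⟨k, hk⟩ := hex 0
  obtain ⟨n, hn⟩ := hex (k + 1)
  have := hσ.injective (hinj _ _ fun t ht => (hk t ht).trans (hn t ht).symm)
  omega

end NBodyHJ
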